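/- Let ρ : Fin r → Equiv.Perm (Fin n) be a string C-group in the two-blocks setup with r = n/2 and n/2 ≥ 7. If R = ∅, then G is isomorphic as a group to Equiv.Perm (Fin 2) × Equiv.Perm (Fin (n/2)) (i.e. G ≅ C₂ × Sym_{n/2}), and, up to duality, the Schläfli symbol of Γ is {2, 3, …, 3}: either orderOf (ρ 0 * ρ 1) = 2 and orderOf (ρ i * ρ (i+1)) = 3 for all i with 1 ≤ i ≤ r − 2, or orderOf (ρ (r−2) * ρ (r−1)) = 2 and orderOf (ρ i * ρ (i+1)) = 3 for all i with 0 ≤ i ≤ r − 3. -/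

import Mathlib

/-- A string group generated by involutions (sggi): each generator has order 2 and
nonconsecutive generators commute. -/
def IsSggi {n r : ℕ} (ρ : Fin r → Equiv.Perm (Fin n)) : Prop :=
  (∀ i, orderOf (ρ i) = 2) ∧
  ∀ i j : Fin r, 1 < |((i : ℕ) : ℤ) - ((j : ℕ) : ℤ)| → (ρ i * ρ j) ^ 2 = 1

/-- A string C-group: an sggi satisfying the intersection property. -/
def IsStringC {n r : ℕ} (ρ : Fin r → Equiv.Perm (Fin n)) : Prop :=
  IsSggi ρ ∧ ∀ J K : Set (Fin r),
    Subgroup.closure (ρ '' J) ⊓ Subgroup.closure (ρ '' K) =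
      Subgroup.closure (ρ '' (J ∩ K))

section

open Equiv

namespace Sggi

/-- The subgroup generated by the members of the family `σ` with index in `A`. -/
def gen {Γ : Type} [Group Γ] (σ : ℕ → Γ) (A : Finset ℕ) : Subgroup Γ :=
  Subgroup.closure (σ '' (A : Set ℕ))

/-- The members of `σ` with index in `S` square to one, commute when their indices are not
consecutive, and none of them is generated by the others. -/
structure Irredundant {Γ : Type} [Group Γ] (σ : ℕ → Γ) (S : Finset ℕ) : Prop where
  sq : ∀ i ∈ S, σ i * σ i = 1
  comm : ∀ i ∈ S, ∀ j ∈ S, i + 2 ≤ j → Commute (σ i) (σ j)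
  irred : ∀ i ∈ S, σ i ∉ gen σ (S.erase i)

theorem perm_apply_inv {X : Type} (g : Perm X) (x : X) : g (g⁻¹ x) = x :=
  g.apply_symm_apply x

theorem perm_inv_apply {X : Type} (g : Perm X) (x : X) : g⁻¹ (g x) = x :=
  g.symm_apply_apply x

section Gen

variable {Γ : Type} [Group Γ] {σ : ℕ → Γ} {A B S : Finset ℕ}

theorem mem_gen {i : ℕ} (h : i ∈ A) : σ i ∈ gen σ A :=
  Subgroup.subset_closure ⟨i, h, rfl⟩

theorem gen_le {H : Subgroup Γ} (h : ∀ i ∈ A, σ i ∈ H) : gen σ A ≤ H := by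
  rw [gen, Subgroup.closure_le]
  rintro _ ⟨i, hi, rfl⟩
  exact h i hi

theorem gen_mono (h : A ⊆ B) : gen σ A ≤ gen σ B :=
  gen_le fun _ hi => mem_gen (h hi)

theorem commute_of_mem_gen {z g : Γ} (h : ∀ i ∈ A, Commute (σ i) z) (hg : g ∈ gen σ A) :
    Commute g z := by
  have : gen σ A ≤ Subgroup.centralizer {z} := gen_le fun i hi => by
    rw [Subgroup.mem_centralizer_singleton_iff]
    exact h i hi
  exact Subgroup.mem_centralizer_singleton_iff.1 (this hg)

theorem Irredundant.mono (h : Irredundant σ S) (hA : A ⊆ S) : Irredundant σ A where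
  sq i hi := h.sq i (hA hi)
  comm i hi j hj := h.comm i (hA hi) j (hA hj)
  irred i hi hmem := h.irred i (hA hi) (gen_mono (Finset.erase_subset_erase i hA) hmem)

theorem Irredundant.notMem_gen (h : Irredundant σ S) (hA : A ⊆ S) {i : ℕ} (hi : i ∈ S)
    (hiA : i ∉ A) : σ i ∉ gen σ A := fun hmem =>
  h.irred i hi (gen_mono (fun _ hj => Finset.mem_erase.2
    ⟨ne_of_mem_of_not_mem hj hiA, hA hj⟩) hmem)

theorem two_mul_card_le_of_lt {Γ : Type} [Group Γ] [Finite Γ] {H K : Subgroup Γ} (h : H < K) :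
    2 * Nat.card H ≤ Nat.card K := by
  obtain ⟨c, hc⟩ := Subgroup.card_dvd_of_le h.le
  have hK : 0 < Nat.card K := Nat.card_pos
  rcases Nat.lt_or_ge c 2 with h2 | h2
  · exfalso
    have : c = 1 := by
      rcases Nat.eq_zero_or_pos c with h0 | h0
      · simp [h0] at hc
        omega
      · omega
    subst this
    exact h.ne (Subgroup.eq_of_le_of_card_ge h.le (by omega))
  · rw [hc]
    nlinarith

/-- A subfamily of minimal size generating the same subgroup is irredundant. -/
theorem exists_irredundant_subset (hsq : ∀ i ∈ S, σ i * σ i = 1)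
    (hcomm : ∀ i ∈ S, ∀ j ∈ S, i + 2 ≤ j → Commute (σ i) (σ j)) :
    ∃ T ⊆ S, Irredundant σ T ∧ ∀ i ∈ S, σ i ∈ gen σ T := by
  induction S using Finset.strongInduction with
  | H S ih =>
    by_cases h : ∀ i ∈ S, σ i ∉ gen σ (S.erase i)
    · exact ⟨S, subset_rfl, ⟨hsq, hcomm, h⟩, fun i hi => mem_gen hi⟩
    · push Not at h
      obtain ⟨i, hi, hmem⟩ := h
      have hss := Finset.erase_subset i S
      obtain ⟨T, hT, hirr, hgen⟩ := ih (S.erase i) (Finset.erase_ssubset hi)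
        (fun j hj => hsq j (hss hj)) (fun j hj k hk => hcomm j (hss hj) k (hss hk))
      refine ⟨T, hT.trans hss, hirr, fun j hj => ?_⟩
      by_cases hji : j = i
      · subst hji
        exact gen_le hgen hmem
      · exact hgen j (Finset.mem_erase.2 ⟨hji, hj⟩)

theorem Irredundant.card_gen_mul_le [Finite Γ] (h : Irredundant σ S) (hA : A ⊆ S) :
    Nat.card (gen σ A) * 2 ^ (S.card - A.card) ≤ Nat.card (gen σ S) := by
  suffices H : ∀ B : Finset ℕ, Disjoint B A → B ⊆ S →
      Nat.card (gen σ A) * 2 ^ B.card ≤ Nat.card (gen σ (B ∪ A)) by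
    have := H (S \ A) Finset.sdiff_disjoint Finset.sdiff_subset
    rwa [Finset.sdiff_union_of_subset hA, Finset.card_sdiff_of_subset hA] at this
  intro B
  induction B using Finset.induction_on with
  | empty => simp
  | insert b B hb ih =>
    intro hd hBS
    rw [Finset.disjoint_insert_left] at hd
    rw [Finset.insert_subset_iff] at hBS
    have hlt : gen σ (B ∪ A) < gen σ (insert b B ∪ A) := by
      refine lt_of_le_of_ne (gen_mono (Finset.union_subset_union_left
        (Finset.subset_insert _ _))) fun heq => ?_
      refine h.notMem_gen (Finset.union_subset hBS.2 hA) hBS.1 (i := b) ?_ ?_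
      · simp [hb, hd.1]
      · rw [heq]
        exact mem_gen (by simp)
    have h2 := two_mul_card_le_of_lt hlt
    have h3 := ih hd.2 hBS.2
    rw [Finset.card_insert_of_notMem hb, pow_succ]
    linarith

end Gen

section Flip

variable {X Q : Type} {ζ : Perm X} {p : X → Q}

/-- The permutations that map every point `x` to `x` or to `ζ x`. -/
def fiberGroup (ζ : Perm X) (hζ : ζ * ζ = 1) : Subgroup (Perm X) where
  carrier := {g | ∀ x, g x = x ∨ g x = ζ x}
  one_mem' x := Or.inl rfl
  mul_mem' {a b} ha hb x := by
    have hz : ∀ x, ζ (ζ x) = x := fun x => by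
      simpa using congrArg (fun f : Perm X => f x) hζ
    rw [Perm.mul_apply]
    rcases hb x with h | h <;> rcases ha (b x) with h' | h' <;> rw [h'] <;> simp [h, hz]
  inv_mem' {a} ha x := by
    have hz : ∀ x, ζ (ζ x) = x := fun x => by
      simpa using congrArg (fun f : Perm X => f x) hζ
    rcases ha (a⁻¹ x) with h | h <;> rw [perm_apply_inv] at h
    · exact Or.inl h.symm
    · right
      rw [h, hz, ← h]

variable {hζ : ζ * ζ = 1}

theorem invol_apply (hζ : ζ * ζ = 1) (x : X) : ζ (ζ x) = x := by
  simpa using congrArg (fun f : Perm X => f x) hζ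

theorem fiberGroup_apply_invol {g : Perm X} (hg : g ∈ fiberGroup ζ hζ) (x : X) :
    g (ζ x) = ζ (g x) := by
  have hz := invol_apply hζ
  have h1 := hg x
  have h2 := hg (ζ x)
  rw [hz] at h2
  rcases h1 with h1 | h1 <;> rcases h2 with h2 | h2
  · rw [h2, h1]
  · have := g.injective (h1.trans h2.symm)
    rw [h2, h1, ← this]
  · have := g.injective (h1.trans h2.symm)
    rw [h2, h1, ← this, ← this]
  · rw [h2, h1, hz]

theorem fiberGroup_commute {g h : Perm X} (hg : g ∈ fiberGroup ζ hζ) (hh : h ∈ fiberGroup ζ hζ) :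
    Commute g h := by
  ext x
  simp only [Perm.mul_apply]
  rcases hg x with h1 | h1 <;> rcases hh x with h2 | h2 <;>
    simp [h1, h2, fiberGroup_apply_invol hg, fiberGroup_apply_invol hh]

theorem fiberGroup_mul_self {g : Perm X} (hg : g ∈ fiberGroup ζ hζ) : g * g = 1 := by
  ext x
  rw [Perm.mul_apply]
  rcases hg x with h | h
  · rw [h, h]; rfl
  · rw [h, fiberGroup_apply_invol hg, h, invol_apply hζ]; rfl

theorem invol_mem_fiberGroup : ζ ∈ fiberGroup ζ hζ := fun _ => Or.inr rfl

/-- `p` is a quotient map onto the set of orbits of the involution `ζ`. -/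
structure IsInvolQuotient (ζ : Perm X) (p : X → Q) : Prop where
  invol : ζ * ζ = 1
  surj : Function.Surjective p
  fiber : ∀ x y, p x = p y ↔ y = x ∨ y = ζ x

open Classical in
/-- The permutation that acts as `ζ` above `B` and trivially elsewhere. -/
noncomputable def flip (hp : IsInvolQuotient ζ p) (B : Finset Q) : Perm X :=
  Function.Involutive.toPerm (fun x => if p x ∈ B then ζ x else x) fun x => by
    have hpz : p (ζ x) = p x := ((hp.fiber x (ζ x)).2 (Or.inr rfl)).symm
    have hz := invol_apply hp.invol
    by_cases h : p x ∈ B <;> simp [h, hpz, hz]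

namespace IsInvolQuotient

theorem map_invol (hp : IsInvolQuotient ζ p) (x : X) : p (ζ x) = p x :=
  ((hp.fiber x (ζ x)).2 (Or.inr rfl)).symm

theorem map_fiberGroup (hp : IsInvolQuotient ζ p) {g : Perm X}
    (hg : g ∈ fiberGroup ζ hp.invol) (x : X) : p (g x) = p x :=
  ((hp.fiber x (g x)).2 (hg x)).symm

open Classical in
theorem flip_apply (hp : IsInvolQuotient ζ p) (B : Finset Q) (x : X) :
    flip hp B x = if p x ∈ B then ζ x else x := rfl

theorem flip_mem (hp : IsInvolQuotient ζ p) (B : Finset Q) :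
    flip hp B ∈ fiberGroup ζ hp.invol := fun x => by
  rw [flip_apply]
  split_ifs <;> simp

open Classical in
theorem flip_insert (hp : IsInvolQuotient ζ p) {B : Finset Q} {q : Q} (hq : q ∉ B) :
    flip hp (insert q B) = flip hp {q} * flip hp B := by
  ext x
  rw [Perm.mul_apply]
  by_cases hx : p x ∈ B
  · have : p x ≠ q := fun h => hq (h ▸ hx)
    simp [flip_apply, hx, hp.map_invol, this]
  · simp [flip_apply, hx]

theorem flip_univ [Fintype Q] (hp : IsInvolQuotient ζ p) : flip hp Finset.univ = ζ := by
  ext x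
  simp [flip_apply]

/-- Every element of the fiber group is determined by the fibers it moves. -/
theorem exists_flip_eq [Fintype Q] (hp : IsInvolQuotient ζ p) {g : Perm X}
    (hg : g ∈ fiberGroup ζ hp.invol) : ∃ B, g = flip hp B := by
  classical
  refine ⟨Finset.univ.filter fun q => ∃ x, p x = q ∧ g x ≠ x, ?_⟩
  ext x
  rw [flip_apply]
  split_ifs with h
  · obtain ⟨y, hy, hgy⟩ := (Finset.mem_filter.1 h).2
    rcases (hp.fiber y x).1 hy with rfl | rfl
    · exact (hg x).resolve_left hgy
    · rw [fiberGroup_apply_invol hg, (hg y).resolve_left hgy]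
  · by_contra hgx
    exact h (Finset.mem_filter.2 ⟨Finset.mem_univ _, x, rfl, hgx⟩)

/-- Conjugation permutes the flips of single fibers. -/
theorem conj_flip (hp : IsInvolQuotient ζ p) {g : Perm X} {g' : Perm Q} (hc : Commute g ζ)
    (hg : ∀ x, p (g x) = g' (p x)) (q : Q) : g * flip hp {q} * g⁻¹ = flip hp {g' q} := by
  ext x
  obtain ⟨y, rfl⟩ := g.surjective x
  have hgz : g (ζ y) = ζ (g y) := congrArg (fun f : Perm X => f y) hc.eq
  have hiff : p (g y) ∈ ({g' q} : Finset Q) ↔ p y ∈ ({q} : Finset Q) := by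
    simp only [Finset.mem_singleton, hg, g'.injective.eq_iff]
  simp only [Perm.mul_apply, perm_inv_apply, flip_apply]
  by_cases h : p y ∈ ({q} : Finset Q)
  · rw [if_pos h, if_pos (hiff.2 h), hgz]
  · rw [if_neg h, if_neg (mt hiff.1 h)]

theorem card_fiberGroup_mul_le [Finite X] [Finite Q] (hp : IsInvolQuotient ζ p) :
    Nat.card (fiberGroup ζ hp.invol) * 2 ^ Nat.card Q ≤ 2 ^ Nat.card X := by
  classical
  have := Fintype.ofFinite Q
  have := Fintype.ofFinite X
  obtain ⟨sec, hsec⟩ := hp.surj.hasRightInverse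
  let F : fiberGroup ζ hp.invol × (Q → Bool) → X → Bool := fun vf x =>
    if x = sec (p x) then vf.2 (p x) else decide (vf.1.1 x = x)
  have hF : Function.Injective F := by
    rintro ⟨v, f⟩ ⟨w, g⟩ h
    have hx : ∀ x, F (v, f) x = F (w, g) x := fun x => congrFun h x
    have hfg : f = g := by
      funext q
      have := hx (sec q)
      simpa [F, hsec q] using this
    have hout : ∀ x, x ≠ sec (p x) → v.1 x = w.1 x := by
      intro x hne
      have h1 := hx x
      simp only [F, hne, if_false, decide_eq_decide] at h1
      rcases v.2 x with hv | hv
      · rw [hv, h1.1 hv]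
      · rcases w.2 x with hw | hw
        · rw [hw, h1.2 hw]
        · rw [hv, hw]
    have hvw : v = w := by
      ext x
      by_cases hne : x = sec (p x)
      · by_cases hzx : ζ x = x
        · rcases v.2 x with hv | hv <;> rcases w.2 x with hw | hw <;> simp [hv, hw, hzx]
        · have h1 := hout (ζ x) (by rw [hp.map_invol, ← hne]; exact hzx)
          rw [fiberGroup_apply_invol v.2, fiberGroup_apply_invol w.2] at h1
          exact ζ.injective h1
      · exact hout x hne
    rw [hvw, hfg]
  have := Nat.card_le_card_of_injective F hF
  simpa [Nat.card_prod] using this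

open Classical in
/-- Membership of flips in a subgroup of index two is a matter of parity. -/
theorem flip_mem_iff_even (hp : IsInvolQuotient ζ p) {W : Subgroup (Perm X)}
    (hW : ∀ u ∈ fiberGroup ζ hp.invol, ∀ v ∈ fiberGroup ζ hp.invol,
      (u * v ∈ W ↔ (u ∈ W ↔ v ∈ W))) (B : Finset Q) :
    flip hp B ∈ W ↔ Even (B.filter fun q => flip hp {q} ∉ W).card := by
  induction B using Finset.induction_on with
  | empty =>
    have : flip hp ∅ = 1 := by
      ext x
      simp [flip_apply]
    simp [this, W.one_mem]
  | insert q B hq ih =>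
    rw [flip_insert hp hq, hW _ (flip_mem hp _) _ (flip_mem hp _), ih, Finset.filter_insert]
    by_cases h : flip hp {q} ∈ W
    · rw [if_neg (not_not.2 h)]
      tauto
    · rw [if_pos h, Finset.card_insert_of_notMem (by simp [hq]), Nat.even_add_one]
      tauto

end IsInvolQuotient

theorem mul_mem_iff_of_two_mul_card {Γ : Type} [Group Γ] [Finite Γ] {W V : Subgroup Γ} (hWV : W ≤ V)
    (h : 2 * Nat.card W = Nat.card V) :
    ∀ u ∈ V, ∀ v ∈ V, (u * v ∈ W ↔ (u ∈ W ↔ v ∈ W)) := by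
  intro u hu v hv
  have h1 : (W.subgroupOf V).index = 2 := by
    have h2 := Subgroup.card_mul_index (W.subgroupOf V)
    rw [Nat.card_congr (Subgroup.subgroupOfEquivOfLe hWV).toEquiv, ← h, mul_comm 2] at h2
    exact Nat.eq_of_mul_eq_mul_left Nat.card_pos h2
  have := Subgroup.mul_mem_iff_of_index_two h1 (a := ⟨u, hu⟩) (b := ⟨v, hv⟩)
  simpa [Subgroup.mem_subgroupOf] using this

end Flip

section Lift

/-- An irredundant family on `X` commuting with an involution `ζ`, together with the induced family
`σ'` on the set `Q` of orbits of `ζ` and an irredundant subfamily generating the induced group. -/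
structure Lift {X Q : Type} (ζ : Perm X) (p : X → Q) (σ : ℕ → Perm X) (σ' : ℕ → Perm Q)
    (S T : Finset ℕ) : Prop where
  quot : IsInvolQuotient ζ p
  irr : Irredundant σ S
  comm : ∀ i ∈ S, Commute (σ i) ζ
  map : ∀ i ∈ S, ∀ x, p (σ i x) = σ' i (p x)
  sub : T ⊆ S
  irr' : Irredundant σ' T
  gen' : ∀ i ∈ S, σ' i ∈ gen σ' T

theorem IsInvolQuotient.exists_map {X Q : Type} {ζ : Perm X} {p : X → Q}
    (hp : IsInvolQuotient ζ p) {g : Perm X} (hg : Commute g ζ) :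
    ∃ g' : Perm Q, ∀ x, p (g x) = g' (p x) := by
  obtain ⟨sec, hsec⟩ := hp.surj.hasRightInverse
  have key : ∀ g : Perm X, Commute g ζ → ∀ x y, p x = p y → p (g x) = p (g y) := by
    intro g hg x y hxy
    rcases (hp.fiber x y).1 hxy with rfl | rfl
    · rfl
    · rw [← Perm.mul_apply, hg.eq, Perm.mul_apply, hp.map_invol]
  refine ⟨⟨fun q => p (g (sec q)), fun q => p (g⁻¹ (sec q)), fun q => ?_, fun q => ?_⟩,
    fun x => ?_⟩
  · have := key g⁻¹ hg.inv_left _ _ (hsec (p (g (sec q))))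
    beta_reduce
    rw [this, perm_inv_apply, hsec]
  · have := key g hg _ _ (hsec (p (g⁻¹ (sec q))))
    beta_reduce
    rw [this, perm_apply_inv, hsec]
  · exact key g hg _ _ (hsec (p x)).symm

theorem exists_involQuotient {X : Type} [Finite X] {ζ : Perm X} (hζ : ζ * ζ = 1) :
    ∃ (Q : Type) (_ : Finite Q) (p : X → Q), IsInvolQuotient ζ p := by
  have hz := invol_apply hζ
  let s : Setoid X :=
    { r := fun x y => y = x ∨ y = ζ x
      iseqv := ⟨fun x => Or.inl rfl, by
        rintro x y (rfl | rfl)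
        · exact Or.inl rfl
        · exact Or.inr (hz x).symm, by
        rintro x y z (rfl | rfl) (rfl | rfl) <;> simp [hz]⟩ }
  exact ⟨Quotient s, inferInstance, Quotient.mk s, hζ, Quotient.mk_surjective,
    fun x y => Quotient.eq⟩

theorem exists_lift_of_quotient {X Q : Type} {ζ : Perm X} {p : X → Q} {σ : ℕ → Perm X}
    {S : Finset ℕ} (hp : IsInvolQuotient ζ p) (hσ : Irredundant σ S)
    (hc : ∀ i ∈ S, Commute (σ i) ζ) : ∃ σ' T, Lift ζ p σ σ' S T := by
  have : ∀ i, ∃ g' : Perm Q, i ∈ S → ∀ x, p (σ i x) = g' (p x) := fun i => by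
    by_cases hi : i ∈ S
    · obtain ⟨g', hg'⟩ := hp.exists_map (hc i hi)
      exact ⟨g', fun _ => hg'⟩
    · exact ⟨1, fun h => absurd h hi⟩
  choose σ' hσ' using this
  obtain ⟨T, hTS, hT, hgen⟩ := exists_irredundant_subset (σ := σ') (S := S)
    (fun i hi => by
      ext q
      obtain ⟨x, rfl⟩ := hp.surj q
      rw [Perm.mul_apply, ← hσ' i hi, ← hσ' i hi, ← Perm.mul_apply, hσ.sq i hi]
      rfl)
    (fun i hi j hj hij => by
      ext q
      obtain ⟨x, rfl⟩ := hp.surj q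
      rw [Perm.mul_apply, Perm.mul_apply, ← hσ' i hi, ← hσ' j hj, ← hσ' i hi, ← hσ' j hj,
        ← Perm.mul_apply, (hσ.comm i hi j hj hij).eq]
      rfl)
  exact ⟨σ', T, hp, hσ, hc, hσ', hTS, hT, hgen⟩

theorem exists_lift {X : Type} [Finite X] {ζ : Perm X} {σ : ℕ → Perm X} {S : Finset ℕ}
    (hζ : ζ * ζ = 1) (hσ : Irredundant σ S) (hc : ∀ i ∈ S, Commute (σ i) ζ) :
    ∃ (Q : Type) (_ : Finite Q) (p : X → Q) (σ' : ℕ → Perm Q) (T : Finset ℕ),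
      Lift ζ p σ σ' S T := by
  obtain ⟨Q, hQ, p, hp⟩ := exists_involQuotient hζ
  obtain ⟨σ', T, h⟩ := exists_lift_of_quotient hp hσ hc
  exact ⟨Q, hQ, p, σ', T, h⟩

theorem IsInvolQuotient.card_lt {X Q : Type} [Finite X] {ζ : Perm X} {p : X → Q}
    (hp : IsInvolQuotient ζ p) (hζ : ζ ≠ 1) : Nat.card Q < Nat.card X := by
  by_contra hle
  have hbij := hp.surj.bijective_of_nat_card_le (not_lt.1 hle)
  exact hζ (Perm.ext fun x => hbij.1 (hp.map_invol x))

theorem IsInvolQuotient.card_le_two_mul {X Q : Type} [Finite X] [Finite Q] {ζ : Perm X}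
    {p : X → Q} (hp : IsInvolQuotient ζ p) : Nat.card X ≤ 2 * Nat.card Q := by
  classical
  obtain ⟨sec, hsec⟩ := hp.surj.hasRightInverse
  have := Nat.card_le_card_of_injective (β := Bool × Q)
    (fun x => (decide (x = sec (p x)), p x)) (by
      intro x y hxy
      simp only [Prod.mk.injEq, decide_eq_decide] at hxy
      obtain ⟨h1, h2⟩ := hxy
      by_cases hx : x = sec (p x)
      · rw [hx, h1.1 hx, h2]
      · have hy := mt h1.2 hx
        have hx' := ((hp.fiber (sec (p x)) x).1 (hsec _)).resolve_left hx
        have hy' := ((hp.fiber (sec (p y)) y).1 (hsec _)).resolve_left hy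
        rw [hx', hy', h2])
  simpa [Nat.card_prod] using this

theorem apply_eq_of_mem_gen {X C : Type} {σ : ℕ → Perm X} {A : Finset ℕ} {col : X → C}
    (hcol : ∀ i ∈ A, ∀ x, col (σ i x) = col x) {g : Perm X} (hg : g ∈ gen σ A) :
    ∀ x, col (g x) = col x := by
  induction hg using Subgroup.closure_induction with
  | mem _ h =>
    obtain ⟨i, hi, rfl⟩ := h
    exact hcol i hi
  | one => exact fun _ => rfl
  | mul a b _ _ ha hb => exact fun x => (ha _).trans (hb x)
  | inv a _ ha => exact fun x => by rw [← ha (a⁻¹ x), perm_apply_inv]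

namespace Lift

variable {X Q : Type} {ζ : Perm X} {p : X → Q} {σ : ℕ → Perm X} {σ' : ℕ → Perm Q}
  {S T A B : Finset ℕ}

/-- The elements generated by `A` that act trivially on the quotient. -/
def kern (_h : Lift ζ p σ σ' S T) (A : Finset ℕ) : Subgroup (Perm X) :=
  gen σ A ⊓ fiberGroup ζ _h.quot.invol

theorem mem_kern (h : Lift ζ p σ σ' S T) {v : Perm X} :
    v ∈ h.kern A ↔ v ∈ gen σ A ∧ v ∈ fiberGroup ζ h.quot.invol := Iff.rfl

theorem push (h : Lift ζ p σ σ' S T) (hA : A ⊆ S) {g : Perm X} (hg : g ∈ gen σ A) :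
    ∃ g' ∈ gen σ' A, ∀ x, p (g x) = g' (p x) := by
  induction hg using Subgroup.closure_induction with
  | mem _ hm =>
    obtain ⟨i, hi, rfl⟩ := hm
    exact ⟨σ' i, mem_gen hi, h.map i (hA hi)⟩
  | one => exact ⟨1, one_mem _, fun _ => rfl⟩
  | mul a b _ _ ha hb =>
    obtain ⟨a', ha', ha⟩ := ha
    obtain ⟨b', hb', hb⟩ := hb
    exact ⟨a' * b', mul_mem ha' hb', fun x => by simp [ha, hb]⟩
  | inv a _ ha =>
    obtain ⟨a', ha', ha⟩ := ha
    refine ⟨a'⁻¹, inv_mem ha', fun x => a'.injective ?_⟩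
    rw [perm_apply_inv, ← ha, perm_apply_inv]

theorem pull (h : Lift ζ p σ σ' S T) (hA : A ⊆ S) {g' : Perm Q} (hg : g' ∈ gen σ' A) :
    ∃ g ∈ gen σ A, ∀ x, p (g x) = g' (p x) := by
  induction hg using Subgroup.closure_induction with
  | mem _ hm =>
    obtain ⟨i, hi, rfl⟩ := hm
    exact ⟨σ i, mem_gen hi, h.map i (hA hi)⟩
  | one => exact ⟨1, one_mem _, fun _ => rfl⟩
  | mul a b _ _ ha hb =>
    obtain ⟨a', ha', ha⟩ := ha
    obtain ⟨b', hb', hb⟩ := hb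
    exact ⟨a' * b', mul_mem ha' hb', fun x => by simp [ha, hb]⟩
  | inv a _ ha =>
    obtain ⟨a', ha', ha⟩ := ha
    refine ⟨a'⁻¹, inv_mem ha', fun x => a.injective ?_⟩
    rw [perm_apply_inv, ← ha, perm_apply_inv]

theorem commute_invol (h : Lift ζ p σ σ' S T) {g : Perm X} (hg : g ∈ gen σ S) : Commute g ζ :=
  commute_of_mem_gen h.comm hg

theorem mem_fiberGroup (h : Lift ζ p σ σ' S T) {g : Perm X} (hg : ∀ x, p (g x) = p x) :
    g ∈ fiberGroup ζ h.quot.invol := fun x => (h.quot.fiber x (g x)).1 (hg x).symm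

theorem conj_mem_fiberGroup (h : Lift ζ p σ σ' S T) {g v : Perm X} (hg : g ∈ gen σ S)
    (hv : v ∈ fiberGroup ζ h.quot.invol) : g * v * g⁻¹ ∈ fiberGroup ζ h.quot.invol := by
  obtain ⟨g', -, hg'⟩ := h.push subset_rfl hg
  refine h.mem_fiberGroup fun x => ?_
  obtain ⟨y, rfl⟩ := g.surjective x
  rw [Perm.mul_apply, Perm.mul_apply, perm_inv_apply, hg', h.quot.map_fiberGroup hv, hg']

/-- Modulo the fiber group, every element is generated by `T`. -/
theorem exists_factor (h : Lift ζ p σ σ' S T) {g : Perm X} (hg : g ∈ gen σ S) :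
    ∃ a ∈ gen σ T, ∃ v ∈ fiberGroup ζ h.quot.invol, g = a * v := by
  obtain ⟨g', hg', hgg'⟩ := h.push subset_rfl hg
  obtain ⟨a, ha, haa'⟩ := h.pull h.sub (gen_le h.gen' hg')
  refine ⟨a, ha, a⁻¹ * g, h.mem_fiberGroup fun x => g'.injective ?_, by simp⟩
  rw [← haa', Perm.mul_apply, perm_apply_inv, hgg']

theorem kern_mono (h : Lift ζ p σ σ' S T) (hAB : A ⊆ B) : h.kern A ≤ h.kern B :=
  inf_le_inf_right _ (gen_mono hAB)

theorem kern_lt (h : Lift ζ p σ σ' S T) (hTA : T ⊆ A) (hAS : A ⊆ S) {b : ℕ} (hb : b ∈ S)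
    (hbA : b ∉ A) : h.kern A < h.kern (insert b A) := by
  refine lt_of_le_of_ne (h.kern_mono (Finset.subset_insert _ _)) fun heq => ?_
  obtain ⟨a, ha, v, hv, hav⟩ := h.exists_factor (mem_gen hb)
  have haA := gen_mono hTA ha
  have hvB : v ∈ h.kern (insert b A) := by
    refine h.mem_kern.2 ⟨?_, hv⟩
    have : v = a⁻¹ * σ b := by simp [hav]
    rw [this]
    exact mul_mem (inv_mem (gen_mono (Finset.subset_insert _ _) haA))
      (mem_gen (Finset.mem_insert_self _ _))
  rw [← heq] at hvB
  refine h.irr.notMem_gen hAS hb hbA ?_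
  rw [hav]
  exact mul_mem haA hvB.1

theorem card_kern_mul_le [Finite X] (h : Lift ζ p σ σ' S T) (hTA : T ⊆ A) (hAB : A ⊆ B)
    (hBS : B ⊆ S) : Nat.card (h.kern A) * 2 ^ (B.card - A.card) ≤ Nat.card (h.kern B) := by
  suffices H : ∀ D : Finset ℕ, Disjoint D A → D ⊆ B →
      Nat.card (h.kern A) * 2 ^ D.card ≤ Nat.card (h.kern (D ∪ A)) by
    have := H (B \ A) Finset.sdiff_disjoint Finset.sdiff_subset
    rwa [Finset.sdiff_union_of_subset hAB, Finset.card_sdiff_of_subset hAB] at this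
  intro D
  induction D using Finset.induction_on with
  | empty => simp
  | insert b D hb ih =>
    intro hd hDB
    rw [Finset.disjoint_insert_left] at hd
    rw [Finset.insert_subset_iff] at hDB
    have hlt := h.kern_lt (A := D ∪ A) (b := b) (hTA.trans Finset.subset_union_right)
      ((Finset.union_subset hDB.2 hAB).trans hBS) (hBS hDB.1) (by simp [hb, hd.1])
    rw [← Finset.insert_union] at hlt
    have h2 := two_mul_card_le_of_lt hlt
    have h3 := ih hd.2 hDB.2
    rw [Finset.card_insert_of_notMem hb, pow_succ]
    linarith

theorem conj_mem_kern (h : Lift ζ p σ σ' S T) (hTA : T ⊆ A) {g v : Perm X}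
    (hg : g ∈ gen σ S) (hv : v ∈ h.kern A) : g * v * g⁻¹ ∈ h.kern A := by
  refine h.mem_kern.2 ⟨?_, h.conj_mem_fiberGroup hg hv.2⟩
  obtain ⟨a, ha, w, hw, rfl⟩ := h.exists_factor hg
  have haA := gen_mono hTA ha
  have : a * w * v * (a * w)⁻¹ = a * v * a⁻¹ := by
    have := (fiberGroup_commute hw hv.2).eq
    rw [mul_assoc a, this]
    group
  rw [this]
  exact mul_mem (mul_mem haA hv.1) (inv_mem haA)

theorem kern_le (h : Lift ζ p σ σ' S T) : h.kern A ≤ fiberGroup ζ h.quot.invol := inf_le_right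

theorem two_mul_card_kern_le [Finite X] (h : Lift ζ p σ σ' S T) (hζ : ζ ∉ gen σ A) :
    2 * Nat.card (h.kern A) ≤ Nat.card (fiberGroup ζ h.quot.invol) :=
  two_mul_card_le_of_lt <| lt_of_le_of_ne h.kern_le fun heq =>
    hζ (heq.ge invol_mem_fiberGroup : ζ ∈ h.kern A).1

theorem card_kern_of_card [Finite X] (h : Lift ζ p σ σ' S T) :
    2 ^ (S.card - T.card) ≤ Nat.card (h.kern S) := by
  have := h.card_kern_mul_le subset_rfl h.sub subset_rfl
  have h1 : 0 < Nat.card (h.kern T) := Nat.card_pos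
  exact le_trans (Nat.le_mul_of_pos_left _ h1) this

theorem card_add_card_le [Finite X] [Finite Q] (h : Lift ζ p σ σ' S T) :
    S.card + Nat.card Q ≤ T.card + Nat.card X := by
  have h1 := h.card_kern_of_card
  have h2 := Subgroup.card_le_of_le (h.kern_le (A := S))
  have h3 := h.quot.card_fiberGroup_mul_le
  have h4 : 2 ^ (S.card - T.card) * 2 ^ Nat.card Q ≤ 2 ^ Nat.card X :=
    (Nat.mul_le_mul_right _ (h1.trans h2)).trans h3
  rw [← pow_add, Nat.pow_le_pow_iff_right (by norm_num)] at h4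
  omega

theorem card_add_card_lt [Finite X] [Finite Q] (h : Lift ζ p σ σ' S T) (hζ : ζ ∉ gen σ S) :
    S.card + 1 + Nat.card Q ≤ T.card + Nat.card X := by
  have h1 := h.card_kern_of_card
  have h2 := h.two_mul_card_kern_le hζ
  have h3 := h.quot.card_fiberGroup_mul_le
  have h4 : 2 ^ (S.card - T.card + 1) * 2 ^ Nat.card Q ≤ 2 ^ Nat.card X :=
    (Nat.mul_le_mul_right _ (by rw [pow_succ]; linarith)).trans h3
  rw [← pow_add, Nat.pow_le_pow_iff_right (by norm_num)] at h4
  omega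

/-- An invariant colouring descends to the quotient. -/
theorem exists_colouring {C : Type} (h : Lift ζ p σ σ' S T) {col : X → C}
    (hζ : ∀ x, col (ζ x) = col x) (hcol : ∀ i ∈ S, ∀ x, col (σ i x) = col x) :
    ∃ col' : Q → C, (∀ x, col' (p x) = col x) ∧ (∀ i ∈ S, ∀ q, col' (σ' i q) = col' q) ∧
      Set.range col' = Set.range col := by
  obtain ⟨sec, hsec⟩ := h.quot.surj.hasRightInverse
  have key : ∀ x, col (sec (p x)) = col x := fun x => by
    rcases (h.quot.fiber x (sec (p x))).1 (hsec _).symm with e | e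
    · rw [e]
    · rw [e, hζ]
  refine ⟨fun q => col (sec q), key, fun i hi q => ?_, ?_⟩
  · obtain ⟨x, rfl⟩ := h.quot.surj q
    beta_reduce
    rw [← h.map i hi, key, key, hcol i hi]
  · ext c
    constructor
    · rintro ⟨q, rfl⟩
      exact ⟨_, rfl⟩
    · rintro ⟨x, rfl⟩
      exact ⟨p x, key x⟩

end Lift

/-- If `u` normalizes `N` and `M`, centralizes the elementary abelian group `N` and `N` has index
two in `M`, then the square of `u` centralizes `M`. -/
theorem mul_self_commute {Γ : Type} [Group Γ] [Finite Γ] {N M : Subgroup Γ} {u : Γ} (hNM : N ≤ M)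
    (h2 : 2 * Nat.card N = Nat.card M) (hN : ∀ v, u * v * u⁻¹ ∈ N ↔ v ∈ N)
    (hM : ∀ v ∈ M, u * v * u⁻¹ ∈ M) (hsq : ∀ v ∈ N, v * v = 1) (hc : ∀ v ∈ N, Commute u v)
    {v : Γ} (hv : v ∈ M) : Commute (u * u) v := by
  have hw : u * v * u⁻¹ * v⁻¹ ∈ N := by
    rw [mul_mem_iff_of_two_mul_card hNM h2 _ (hM v hv) _ (inv_mem hv), hN, inv_mem_iff]
  set w := u * v * u⁻¹ * v⁻¹ with hwdef
  have h1 : u * v = w * v * u := by rw [hwdef]; group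
  have h3 := (hc w hw).eq
  have h4 := hsq w hw
  calc u * u * v = u * (u * v) := mul_assoc _ _ _
    _ = u * w * v * u := by rw [h1]; group
    _ = w * (u * v) * u := by rw [h3]; group
    _ = w * w * v * u * u := by rw [h1]; group
    _ = v * (u * u) := by rw [h4]; group

namespace Lift

variable {X Q : Type} {ζ : Perm X} {p : X → Q} {σ : ℕ → Perm X} {σ' : ℕ → Perm Q}
  {S T A B : Finset ℕ}

theorem conj_mem_kern_iff (h : Lift ζ p σ σ' S T) (hTA : T ⊆ A) {g : Perm X}
    (hg : g ∈ gen σ S) (v : Perm X) : g * v * g⁻¹ ∈ h.kern A ↔ v ∈ h.kern A := by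
  refine ⟨fun hv => ?_, h.conj_mem_kern hTA hg⟩
  have := h.conj_mem_kern hTA (inv_mem hg) hv
  convert this using 1
  group

theorem card_kern_eq [Finite X] [Finite Q] (h : Lift ζ p σ σ' S T) (hζ : ζ ∉ gen σ S)
    (hcard : Nat.card X + T.card ≤ S.card + 1 + Nat.card Q) (hTA : T ⊆ A) (hAS : A ⊆ S) :
    Nat.card (h.kern A) = 2 ^ (A.card - T.card) := by
  have h1 := h.card_kern_mul_le subset_rfl hTA hAS
  have h2 := h.card_kern_mul_le hTA hAS subset_rfl
  have h3 := h.two_mul_card_kern_le hζ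
  have h4 := h.quot.card_fiberGroup_mul_le
  have h0 : 0 < Nat.card (h.kern T) := Nat.card_pos
  have c1 := Finset.card_le_card hTA
  have c2 := Finset.card_le_card hAS
  have h5 : Nat.card (h.kern A) * 2 ^ (S.card - A.card + 1 + Nat.card Q) ≤
      2 ^ (A.card - T.card) * 2 ^ (S.card - A.card + 1 + Nat.card Q) := by
    calc _ = 2 * (Nat.card (h.kern A) * 2 ^ (S.card - A.card)) * 2 ^ Nat.card Q := by
          rw [pow_add, pow_add]; ring
      _ ≤ 2 ^ Nat.card X := (Nat.mul_le_mul_right _ (by linarith)).trans h4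
      _ ≤ 2 ^ (A.card - T.card + (S.card - A.card + 1 + Nat.card Q)) :=
          Nat.pow_le_pow_right (by norm_num) (by omega)
      _ = _ := pow_add _ _ _
  have h6 := Nat.le_of_mul_le_mul_right h5 (by positivity)
  have h7 : 2 ^ (A.card - T.card) ≤ Nat.card (h.kern A) := le_trans (by nlinarith) h1
  omega

theorem two_mul_card_kern_eq [Finite X] [Finite Q] (h : Lift ζ p σ σ' S T) (hζ : ζ ∉ gen σ S)
    (hcard : Nat.card X + T.card ≤ S.card + 1 + Nat.card Q) :
    2 * Nat.card (h.kern S) = Nat.card (fiberGroup ζ h.quot.invol) := by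
  refine le_antisymm (h.two_mul_card_kern_le hζ) ?_
  rw [h.card_kern_eq hζ hcard h.sub subset_rfl]
  have h4 := h.quot.card_fiberGroup_mul_le
  have c1 := Finset.card_le_card h.sub
  refine Nat.le_of_mul_le_mul_right (h4.trans ?_) (show 0 < 2 ^ Nat.card Q by positivity)
  rw [← pow_succ', ← pow_add]
  exact Nat.pow_le_pow_right (by norm_num) (by omega)

theorem pow_commute_kern [Finite X] [Finite Q] (h : Lift ζ p σ σ' S T) (hζ : ζ ∉ gen σ S)
    (hcard : Nat.card X + T.card ≤ S.card + 1 + Nat.card Q) {g : Perm X} (hg : g ∈ gen σ S)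
    (D : Finset ℕ) (hD : Disjoint D T) (hDS : D ⊆ S) :
    ∀ v ∈ h.kern (D ∪ T), Commute (g ^ 2 ^ D.card) v := by
  induction D using Finset.induction_on with
  | empty =>
    intro v hv
    have h1 := h.card_kern_eq hζ hcard subset_rfl h.sub
    rw [Nat.sub_self, pow_zero, Subgroup.card_eq_one] at h1
    rw [Finset.empty_union, h1, Subgroup.mem_bot] at hv
    rw [hv]
    exact Commute.one_right _
  | insert b D hb ih =>
    rw [Finset.disjoint_insert_left] at hD
    rw [Finset.insert_subset_iff] at hDS
    have hsub : T ⊆ D ∪ T := Finset.subset_union_right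
    have hsub' : T ⊆ insert b D ∪ T := Finset.subset_union_right
    have hu : g ^ 2 ^ D.card ∈ gen σ S := pow_mem hg _
    intro v hv
    rw [Finset.card_insert_of_notMem hb, pow_succ, pow_mul, pow_two]
    refine mul_self_commute (N := h.kern (D ∪ T)) (M := h.kern (insert b D ∪ T))
      (h.kern_mono (Finset.union_subset_union_left (Finset.subset_insert _ _))) ?_
      (h.conj_mem_kern_iff hsub hu) (fun v => h.conj_mem_kern hsub' hu)
      (fun v hv => fiberGroup_mul_self hv.2) (ih hD.2 hDS.2) hv
    rw [h.card_kern_eq hζ hcard hsub (Finset.union_subset hDS.2 h.sub),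
      h.card_kern_eq hζ hcard hsub' (Finset.union_subset (Finset.insert_subset hDS.1 hDS.2) h.sub),
      Finset.card_union_of_disjoint hD.2, Finset.insert_union, Finset.card_insert_of_notMem
        (by simp [hb, hD.1]), Finset.card_union_of_disjoint hD.2, ← pow_succ']
    congr 1
    omega

/-- In the extremal case, the group acts on the orbits moved by `ζ` as a two-group. -/
theorem exists_pow_map_eq [Finite X] [Finite Q] (h : Lift ζ p σ σ' S T) (hζ : ζ ∉ gen σ S)
    (hcard : Nat.card X + T.card ≤ S.card + 1 + Nat.card Q) :
    ∃ k : ℕ, ∀ g ∈ gen σ S, ∀ x, ζ x ≠ x → p ((g ^ 2 ^ k) x) = p x := by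
  refine ⟨(S \ T).card + 1, fun g hg x hx => ?_⟩
  have hu : g ^ 2 ^ (S \ T).card ∈ gen σ S := pow_mem hg _
  have hc : Commute (g ^ 2 ^ ((S \ T).card + 1)) (flip h.quot {p x}) := by
    rw [pow_succ, pow_mul, pow_two]
    refine mul_self_commute h.kern_le (h.two_mul_card_kern_eq hζ hcard)
      (h.conj_mem_kern_iff h.sub hu) (fun v => h.conj_mem_fiberGroup hu)
      (fun v hv => fiberGroup_mul_self hv.2) ?_ (h.quot.flip_mem _)
    have := h.pow_commute_kern hζ hcard hg (S \ T) Finset.sdiff_disjoint Finset.sdiff_subset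
    rwa [Finset.sdiff_union_of_subset h.sub] at this
  set u := g ^ 2 ^ ((S \ T).card + 1)
  have hug : u ∈ gen σ S := pow_mem hg _
  obtain ⟨u', -, hu'⟩ := h.push subset_rfl hug
  have h1 := h.quot.conj_flip (h.commute_invol hug) hu' (p x)
  rw [hc.eq, mul_inv_cancel_right] at h1
  have h2 := congrArg (fun f : Perm X => f x) h1
  simp only [IsInvolQuotient.flip_apply] at h2
  rw [hu']
  by_contra hne
  rw [if_neg (fun e => hne (Finset.mem_singleton.1 e).symm), if_pos (Finset.mem_singleton_self _)]
    at h2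
  exact hx h2

/-- In the extremal case, some orbit moved by `ζ` is invariant under the whole group. -/
theorem exists_fixed_fiber [Finite X] [Finite Q] (h : Lift ζ p σ σ' S T) (hζ : ζ ∉ gen σ S)
    (hcard : Nat.card X + T.card ≤ S.card + 1 + Nat.card Q) :
    ∃ x, ζ x ≠ x ∧ ∀ i ∈ S, σ' i (p x) = p x := by
  classical
  have := Fintype.ofFinite Q
  obtain ⟨k, hk⟩ := h.exists_pow_map_eq hζ hcard
  have hodd := (h.quot.flip_mem_iff_even (mul_mem_iff_of_two_mul_card h.kern_le
    (h.two_mul_card_kern_eq hζ hcard)) Finset.univ).not.1 (by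
      rw [h.quot.flip_univ]
      exact fun hm => hζ hm.1)
  have hmoved : ∀ q, flip h.quot {q} ∉ h.kern S → ∃ x, p x = q ∧ ζ x ≠ x := by
    intro q hq
    by_contra hcon
    push Not at hcon
    apply hq
    have : flip h.quot {q} = 1 := by
      ext x
      rw [IsInvolQuotient.flip_apply]
      split_ifs with hx
      · exact hcon x (Finset.mem_singleton.1 hx)
      · rfl
    rw [this]
    exact one_mem _
  let K := gen σ' T
  let M : SubMulAction K Q :=
    { carrier := {q | flip h.quot {q} ∉ h.kern S}
      smul_mem' := by
        rintro ⟨g', hg'⟩ q hq hmem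
        obtain ⟨g, hg, hgg⟩ := h.pull h.sub hg'
        have hgS := gen_mono h.sub hg
        apply hq
        have h1 := h.quot.conj_flip (h.commute_invol hgS) hgg q
        rw [← h.conj_mem_kern_iff h.sub hgS, h1]
        exact hmem }
  have hP : IsPGroup 2 (MulAction.toPermHom K M).range := by
    rintro ⟨_, ⟨⟨g', hg'⟩, rfl⟩⟩
    refine ⟨k, Subtype.ext ?_⟩
    obtain ⟨g, hg, hgg⟩ := h.pull h.sub hg'
    have hgpow : ∀ j : ℕ, ∀ x, p ((g ^ j) x) = (g' ^ j) (p x) := by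
      intro j
      induction j with
      | zero => exact fun _ => rfl
      | succ j ih => exact fun x => by simp [pow_succ, ih, hgg]
    rw [SubmonoidClass.coe_pow, ← map_pow, OneMemClass.coe_one]
    ext ⟨q, hq⟩
    obtain ⟨x, rfl, hx⟩ := hmoved q hq
    change (g' ^ 2 ^ k) (p x) = p x
    rw [← hgpow, hk g (gen_mono h.sub hg) x hx]
  have hcardM := hP.card_modEq_card_fixedPoints M
  have hMcard : Nat.card M = (Finset.univ.filter fun q => flip h.quot {q} ∉ h.kern S).card := by
    rw [← Fintype.card_subtype, ← Nat.card_eq_fintype_card]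
    rfl
  have hne : Nat.card (MulAction.fixedPoints (MulAction.toPermHom K M).range M) ≠ 0 := by
    intro h0
    rw [h0, hMcard] at hcardM
    exact hodd (Nat.even_iff.2 hcardM)
  obtain ⟨⟨⟨q, hq⟩, hfix⟩⟩ := (Nat.card_ne_zero.1 hne).1
  obtain ⟨x, rfl, hx⟩ := hmoved q hq
  refine ⟨x, hx, fun i hi => ?_⟩
  have := hfix ⟨MulAction.toPermHom K M ⟨σ' i, h.gen' i hi⟩, ⟨_, rfl⟩⟩
  exact congrArg Subtype.val this

end Lift

end Lift

section Bound

theorem ncard_range_le_card {X C : Type} [Finite X] (col : X → C) :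
    (Set.range col).ncard ≤ Nat.card X := by
  rw [← Set.image_univ, ← Set.ncard_univ]
  exact Set.ncard_image_le

/-- Separating a point from another point of the same colour gives one more colour. -/
theorem ncard_range_succ_le {Q C : Type} [Finite Q] (f : Q → C) {q₀ q₁ : Q} (hne : q₁ ≠ q₀)
    (hf : f q₁ = f q₀) :
    (Set.range f).ncard + 1 ≤ (Set.range fun q => (f q, q = q₀)).ncard := by
  let e : C → C × Prop := fun c => (c, c = f q₀)
  have he : Function.Injective e := fun a b hab => (Prod.ext_iff.1 hab).1
  have hnot : (f q₁, False) ∉ e '' Set.range f := by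
    rintro ⟨c, -, hc⟩
    simp only [e, Prod.mk.injEq] at hc
    exact hc.2 ▸ (hc.1.trans hf)
  rw [← Set.ncard_image_of_injective _ he, ← Set.ncard_insert_of_notMem hnot]
  refine Set.ncard_le_ncard ?_
  rintro c (rfl | ⟨_, ⟨q, rfl⟩, rfl⟩)
  · exact ⟨q₁, by simp [hne]⟩
  · by_cases hq : f q = f q₀
    · exact ⟨q₀, by simp [e, hq]⟩
    · refine ⟨q, ?_⟩
      have : q ≠ q₀ := fun h => hq (by rw [h])
      simp [e, hq, this]

theorem commute_swap {X : Type} [DecidableEq X] {g : Perm X} {x y : X}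
    (h : swap (g x) (g y) = swap x y) : Commute g (swap x y) := by
  rw [commute_iff_eq, Equiv.mul_swap_eq_swap_mul, h]

/-- The length of an irredundant family is at most the degree minus the number of orbits. -/
theorem Irredundant.card_add_ncard_le {X C : Type} [Finite X] {σ : ℕ → Perm X} {S : Finset ℕ}
    (hσ : Irredundant σ S) {col : X → C} (hcol : ∀ i ∈ S, ∀ x, col (σ i x) = col x) :
    S.card + (Set.range col).ncard ≤ Nat.card X := by
  classical
  obtain ⟨n, hn⟩ : ∃ n, Nat.card X = n := ⟨_, rfl⟩
  induction n using Nat.strong_induction_on generalizing X C S σ with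
  | _ n ih =>
    subst hn
    have central : ∀ {ζ : Perm X}, ζ ≠ 1 → ζ * ζ = 1 → (∀ i ∈ S, Commute (σ i) ζ) →
        (∀ x, col (ζ x) = col x) → S.card + (Set.range col).ncard ≤ Nat.card X := by
      intro ζ h1 hsq hc hz
      obtain ⟨Q, hQ, p, σ', T, h⟩ := exists_lift hsq hσ hc
      obtain ⟨col', -, hcol', hrange⟩ := h.exists_colouring hz hcol
      have h2 := ih _ (h.quot.card_lt h1) h.irr' (fun i hi => hcol' i (h.sub hi)) rfl
      have h3 := h.card_add_card_le
      rw [hrange] at h2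
      omega
    rcases S.eq_empty_or_nonempty with rfl | hne
    · simpa using ncard_range_le_card col
    by_contra! hlt
    set i₀ := S.min' hne
    have hi₀ : i₀ ∈ S := S.min'_mem hne
    have hζ1 : σ i₀ ≠ 1 := fun h1 => hσ.irred i₀ hi₀ (by rw [h1]; exact one_mem _)
    set S' := S.filter (i₀ + 2 ≤ ·)
    have hS' : S' ⊆ S := Finset.filter_subset _ _
    have hcardS : S.card ≤ S'.card + 2 := by
      have hsub : S ⊆ insert i₀ (insert (i₀ + 1) S') := by
        intro i hi
        have := S.min'_le i hi
        have : i = i₀ ∨ i = i₀ + 1 ∨ i₀ + 2 ≤ i := by omega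
        simp only [Finset.mem_insert, S', Finset.mem_filter]
        tauto
      refine (Finset.card_le_card hsub).trans ?_
      exact (Finset.card_insert_le _ _).trans (Nat.succ_le_succ (Finset.card_insert_le _ _))
    have hζ : σ i₀ ∉ gen σ S' := hσ.notMem_gen hS' hi₀ (by simp [S'])
    obtain ⟨Q, hQ, p, σ', T, h⟩ := exists_lift (hσ.sq i₀ hi₀) (hσ.mono hS') fun i hi =>
      (hσ.comm i₀ hi₀ i (hS' hi) (Finset.mem_filter.1 hi).2).symm
    obtain ⟨col', hcolp, hcol', hrange⟩ := h.exists_colouring (hcol i₀ hi₀)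
      fun i hi => hcol i (hS' hi)
    have hQX := h.quot.card_lt hζ1
    have h2 := ih _ hQX h.irr' (fun i hi => hcol' i (h.sub hi)) rfl
    have h3 := h.card_add_card_lt hζ
    rw [hrange] at h2
    obtain ⟨x, hx, hfix⟩ := h.exists_fixed_fiber hζ (by omega)
    have huniq : ∀ q, col' q = col' (p x) → q = p x := by
      intro q hq
      by_contra hqx
      have h4 := ncard_range_succ_le col' hqx hq
      have h5 := ih _ hQX h.irr' (col := fun q => (col' q, q = p x)) (fun i hi q => by
        rw [hcol' i (h.sub hi)]
        congr 1
        rw [← (σ' i).injective.eq_iff (a := q), hfix i (h.sub hi)]) rfl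
      rw [hrange] at h4
      omega
    have hclass : ∀ y, col y = col x → y = x ∨ y = σ i₀ x := by
      intro y hy
      rw [← hcolp, ← hcolp] at hy
      exact (h.quot.fiber x y).1 (huniq _ hy).symm
    refine absurd (central (ζ := swap x (σ i₀ x)) ?_ (Equiv.swap_mul_self _ _) ?_ ?_)
      (not_le.2 hlt)
    · rw [Ne, Equiv.Perm.one_def, Equiv.swap_eq_refl_iff]
      exact fun e => hx e.symm
    · intro i hi
      apply commute_swap
      have h6 := hclass (σ i x) (hcol i hi x)
      have h7 := hclass (σ i (σ i₀ x)) (by rw [hcol i hi, hcol i₀ hi₀])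
      have h8 : σ i x ≠ σ i (σ i₀ x) := fun e => hx ((σ i).injective e).symm
      rcases h6 with h6 | h6 <;> rcases h7 with h7 | h7
      · exact absurd (h6.trans h7.symm) h8
      · rw [h6, h7]
      · rw [h6, h7, Equiv.swap_comm]
      · exact absurd (h6.trans h7.symm) h8
    · intro y
      rw [Equiv.swap_apply_def]
      split_ifs with h9 h9
      · rw [h9, hcol i₀ hi₀]
      · rw [h9, hcol i₀ hi₀]
      · rfl

/-- A commuting involution outside the generated group improves the bound by one. -/
theorem Irredundant.card_add_ncard_lt {X C : Type} [Finite X] {σ : ℕ → Perm X} {S : Finset ℕ}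
    (hσ : Irredundant σ S) {ζ : Perm X} (hsq : ζ * ζ = 1) (hζ : ζ ∉ gen σ S)
    (hc : ∀ i ∈ S, Commute (σ i) ζ) {col : X → C} (hcolζ : ∀ x, col (ζ x) = col x)
    (hcol : ∀ i ∈ S, ∀ x, col (σ i x) = col x) :
    S.card + 1 + (Set.range col).ncard ≤ Nat.card X := by
  obtain ⟨Q, hQ, p, σ', T, h⟩ := exists_lift hsq hσ hc
  obtain ⟨col', -, hcol', hrange⟩ := h.exists_colouring hcolζ hcol
  have h2 := h.irr'.card_add_ncard_le fun i hi => hcol' i (h.sub hi)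
  have h3 := h.card_add_card_lt hζ
  rw [hrange] at h2
  omega

end Bound

section FirstGenerator

variable {X Q : Type} {ζ : Perm X} {p : X → Q} {σ : ℕ → Perm X} {σ' : ℕ → Perm Q}
  {S T A B : Finset ℕ}

theorem IsInvolQuotient.two_mul_card_le [Finite X] (hp : IsInvolQuotient ζ p)
    (hfix : ∀ x, ζ x ≠ x) : 2 * Nat.card Q ≤ Nat.card X := by
  obtain ⟨sec, hsec⟩ := hp.surj.hasRightInverse
  have hp' : ∀ b : Bool, ∀ q, p (if b then sec q else ζ (sec q)) = q := by
    intro b q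
    cases b <;> simp [hp.map_invol, hsec q]
  have := Nat.card_le_card_of_injective
    (fun bq : Bool × Q => if bq.1 then sec bq.2 else ζ (sec bq.2)) (by
      rintro ⟨b, q⟩ ⟨c, r⟩ h
      have hqr : q = r := by rw [← hp' b q, ← hp' c r]; exact congrArg p h
      subst hqr
      have := hfix (sec q)
      cases b <;> cases c <;> simp only [if_true, Bool.false_eq_true, if_false] at h
      · rfl
      · exact absurd h this
      · exact absurd h.symm this
      · rfl)
  simpa [Nat.card_prod] using this

/-- An index-two subgroup of the fiber group that is normalized by a group with only constant
invariant predicates on the quotient contains `ζ` exactly when the quotient has even size. -/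
theorem Lift.invol_mem_iff_even [Finite X] [Finite Q] (h : Lift ζ p σ σ' S T)
    (hconst : ∀ f : Q → Prop, (∀ i ∈ S, ∀ q, f (σ' i q) = f q) → ∀ q q', f q → f q')
    {W : Subgroup (Perm X)} (hWV : W ≤ fiberGroup ζ h.quot.invol)
    (hcard : 2 * Nat.card W = Nat.card (fiberGroup ζ h.quot.invol))
    (hconj : ∀ g ∈ gen σ S, ∀ v ∈ W, g * v * g⁻¹ ∈ W) : ζ ∈ W ↔ Even (Nat.card Q) := by
  classical
  have := Fintype.ofFinite Q
  have hparity := h.quot.flip_mem_iff_even (mul_mem_iff_of_two_mul_card hWV hcard)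
  have hinv : ∀ i ∈ S, ∀ q, (flip h.quot {σ' i q} ∉ W) = (flip h.quot {q} ∉ W) := by
    intro i hi q
    have hg := mem_gen (σ := σ) hi
    rw [← h.quot.conj_flip (h.comm i hi) (h.map i hi) q]
    refine propext (not_congr ⟨fun hm => ?_, hconj _ hg _⟩)
    have := hconj _ (inv_mem hg) _ hm
    convert this using 1
    group
  have hall := hconst (fun q => flip h.quot {q} ∉ W) hinv
  by_cases hq : ∃ q, flip h.quot {q} ∉ W
  · obtain ⟨q, hq⟩ := hq
    have h1 := hparity Finset.univ
    rwa [h.quot.flip_univ, Finset.filter_true_of_mem fun q' _ => hall q q' hq,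
      Finset.card_univ, ← Nat.card_eq_fintype_card] at h1
  · push Not at hq
    exfalso
    have hle : fiberGroup ζ h.quot.invol ≤ W := by
      intro v hv
      obtain ⟨B, rfl⟩ := h.quot.exists_flip_eq hv
      rw [hparity, Finset.filter_false_of_mem fun q _ => not_not.2 (hq q)]
      simp
    have h2 := Subgroup.card_le_of_le hle
    have h3 : 0 < Nat.card W := Nat.card_pos
    omega

/-- The subgroup generated by `N` and `ζ`. -/
def adjoinInvol {hζ : ζ * ζ = 1} (N : Subgroup (Perm X)) (hN : N ≤ fiberGroup ζ hζ) :
    Subgroup (Perm X) where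
  carrier := {v | v ∈ N ∨ v * ζ ∈ N}
  one_mem' := Or.inl (one_mem _)
  mul_mem' {u v} hu hv := by
    have hz : ζ ∈ fiberGroup ζ hζ := invol_mem_fiberGroup
    rcases hu with hu | hu <;> rcases hv with hv | hv
    · exact Or.inl (mul_mem hu hv)
    · right
      rw [mul_assoc]
      exact mul_mem hu hv
    · right
      rw [mul_assoc, (fiberGroup_commute (hN hv) hz).eq, ← mul_assoc]
      exact mul_mem hu hv
    · left
      have hc := (fiberGroup_commute (hN hv) hz).eq
      have : u * v = u * ζ * (v * ζ) := by
        rw [mul_assoc v, hζ, mul_one] at hc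
        rw [mul_assoc u, ← hc]
      rw [this]
      exact mul_mem hu hv
  inv_mem' {v} hv := by
    rcases hv with hv | hv
    · exact Or.inl (inv_mem hv)
    · right
      have hz : ζ ∈ fiberGroup ζ hζ := invol_mem_fiberGroup
      have h1 := inv_mem hv
      rw [mul_inv_rev, inv_eq_of_mul_eq_one_left hζ] at h1
      have h2 : Commute ζ v⁻¹ := by
        have h3 := (fiberGroup_commute hz (hN hv)).eq
        have h4 : Commute ζ v := by
          rw [← mul_assoc, mul_assoc v, hζ, mul_one] at h3
          have : ζ * v = v * ζ := by
            have h5 := congrArg (· * ζ) h3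
            simpa [mul_assoc, hζ] using h5
          exact this
        exact h4.inv_right
      change v⁻¹ * ζ ∈ N
      rwa [← h2.eq]

theorem card_adjoinInvol_le [Finite X] {hζ : ζ * ζ = 1} {N : Subgroup (Perm X)}
    (hN : N ≤ fiberGroup ζ hζ) : Nat.card (adjoinInvol N hN) ≤ 2 * Nat.card N := by
  classical
  have := Nat.card_le_card_of_injective (β := Bool × N) (fun v : adjoinInvol N hN =>
    if hv : v.1 ∈ N then (true, ⟨v.1, hv⟩) else (false, ⟨v.1 * ζ, v.2.resolve_left hv⟩)) (by
      intro u v huv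
      by_cases hu : u.1 ∈ N <;> by_cases hv : v.1 ∈ N <;> simp [hu, hv] at huv
      · exact huv
      · exact huv)
  simpa [Nat.card_prod] using this

/-- An element of the fiber group commuting with a group that has only constant invariant
predicates on the quotient is `1` or `ζ`. -/
theorem Lift.eq_one_or_eq_invol (h : Lift ζ p σ σ' S T)
    (hconst : ∀ f : Q → Prop, (∀ i ∈ S, ∀ q, f (σ' i q) = f q) → ∀ q q', f q → f q')
    {v : Perm X} (hv : v ∈ fiberGroup ζ h.quot.invol) (hc : ∀ i ∈ S, Commute (σ i) v) :
    v = 1 ∨ v = ζ := by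
  obtain ⟨f, hf, hfinv, -⟩ := h.exists_colouring (col := fun x => v x = x)
    (fun x => by
      rw [fiberGroup_apply_invol hv, ζ.injective.eq_iff])
    (fun i hi x => by
      rw [← Perm.mul_apply, ← (hc i hi).eq, Perm.mul_apply, (σ i).injective.eq_iff])
  have hall := hconst f hfinv
  by_cases hx : ∃ x, v x = x
  · obtain ⟨x, hx⟩ := hx
    left
    ext y
    have := hall (p x) (p y) (by rw [hf]; exact hx)
    rw [hf] at this
    exact this
  · push Not at hx
    right
    ext y
    exact (hv y).resolve_left (hx y)

theorem IsPGroup_fiberGroup {hζ : ζ * ζ = 1} {N : Subgroup (Perm X)}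
    (hN : N ≤ fiberGroup ζ hζ) : IsPGroup 2 N := fun v =>
  ⟨1, Subtype.ext (by simpa [pow_two] using fiberGroup_mul_self (hN v.2))⟩

theorem Lift.exists_nonconst [Finite X] [Finite Q] (h : Lift ζ p σ σ' S T) (hζ : ζ ∉ gen σ S)
    (hX : 7 ≤ Nat.card X) (hS : S.card + 3 = Nat.card X) :
    ∃ f : Q → Prop, (∀ i ∈ S, ∀ q, f (σ' i q) = f q) ∧ ∃ q q', f q ∧ ¬ f q' := by
  by_contra! hconst
  have hζ1 : ζ ≠ 1 := fun h1 => hζ (h1 ▸ one_mem _)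
  have hmoved : ∀ x, ζ x ≠ x := by
    intro x hx
    obtain ⟨f, hf, hfinv, -⟩ := h.exists_colouring (col := fun x => ζ x = x)
      (fun x => by
        rw [ζ.injective.eq_iff])
      (fun i hi x => by
        rw [← Perm.mul_apply, ← (h.comm i hi).eq, Perm.mul_apply, (σ i).injective.eq_iff])
    refine hζ1 (Perm.ext fun y => ?_)
    have := hconst f hfinv (p x) (p y) (by rw [hf]; exact hx)
    rw [hf] at this
    exact this
  have hQ2 := h.quot.two_mul_card_le hmoved
  have hX' : Nat.card X ≠ 0 := by omega
  obtain ⟨x₀⟩ := (Nat.card_ne_zero.1 hX').1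
  have hTQ : T.card + 1 ≤ Nat.card Q := by
    have h1 := h.irr'.card_add_ncard_le (col := fun _ => ()) (fun _ _ _ => rfl)
    have : Nonempty Q := ⟨p x₀⟩
    simpa [Set.range_const] using h1
  have hTS := Finset.card_le_card h.sub
  obtain ⟨ℓ, hℓ⟩ : ∃ ℓ, S.card = T.card + ℓ + 2 := ⟨S.card - T.card - 2, by omega⟩
  have hcardST : 1 < (S \ T).card := by
    rw [Finset.card_sdiff_of_subset h.sub]
    omega
  obtain ⟨s₁, hs₁, s₂, hs₂, hne⟩ := Finset.one_lt_card.1 hcardST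
  rw [Finset.mem_sdiff] at hs₁ hs₂
  set A₁ := insert s₁ T
  set A₂ := S.erase s₂
  have hA₁S : A₁ ⊆ S := Finset.insert_subset hs₁.1 h.sub
  have hTA₁ : T ⊆ A₁ := Finset.subset_insert _ _
  have hA₂S : A₂ ⊆ S := Finset.erase_subset _ _
  have hA₁₂ : A₁ ⊆ A₂ := by
    intro i hi
    refine Finset.mem_erase.2 ⟨?_, hA₁S hi⟩
    rintro rfl
    rcases Finset.mem_insert.1 hi with e | e
    · exact hne e.symm
    · exact hs₂.2 e
  have hTA₂ := hTA₁.trans hA₁₂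
  have hcA₁ : A₁.card = T.card + 1 := Finset.card_insert_of_notMem hs₁.2
  have hcA₂ : A₂.card + 1 = S.card := Finset.card_erase_add_one hs₂.1
  have hN₁ : 4 ≤ Nat.card (h.kern A₁) := by
    obtain ⟨k, hk⟩ := IsPGroup.iff_card.1 (IsPGroup_fiberGroup (h.kern_le (A := A₁)))
    have hgt := two_mul_card_le_of_lt (h.kern_lt subset_rfl h.sub hs₁.1 hs₁.2)
    have hpos : 0 < Nat.card (h.kern T) := Nat.card_pos
    rcases Nat.lt_or_ge k 2 with hk2 | hk2
    · exfalso
      have hcard2 : Nat.card (h.kern A₁) = 2 := by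
        have hk' : k = 0 ∨ k = 1 := by omega
        rcases hk' with rfl | rfl
        · rw [pow_zero] at hk
          change 2 * _ ≤ Nat.card (h.kern A₁) at hgt
          omega
        · simpa using hk
      obtain ⟨a, b, hab, huniv⟩ := Nat.card_eq_two_iff.1 hcard2
      obtain ⟨v, hv1⟩ : ∃ v : h.kern A₁, v ≠ 1 := by
        by_cases ha : a = 1
        · exact ⟨b, fun hb => hab (ha.trans hb.symm)⟩
        · exact ⟨a, ha⟩
      have huniq : ∀ w : h.kern A₁, w ≠ 1 → w = v := by
        intro w hw
        have e1 : (1 : h.kern A₁) ∈ ({a, b} : Set _) := huniv ▸ Set.mem_univ _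
        have e2 : v ∈ ({a, b} : Set _) := huniv ▸ Set.mem_univ _
        have e3 : w ∈ ({a, b} : Set _) := huniv ▸ Set.mem_univ _
        simp only [Set.mem_insert_iff, Set.mem_singleton_iff] at e1 e2 e3
        rcases e1 with e1 | e1 <;> rcases e2 with e2 | e2 <;> rcases e3 with e3 | e3
        all_goals first
          | exact e3.trans e2.symm
          | exact absurd (e2.trans e1.symm) hv1
          | exact absurd (e3.trans e1.symm) hw
      have hcomm : ∀ i ∈ S, Commute (σ i) v.1 := by
        intro i hi
        have h1 := huniq ⟨_, h.conj_mem_kern hTA₁ (mem_gen hi) v.2⟩ (by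
          intro e
          apply hv1
          have e' := congrArg Subtype.val e
          simp only [OneMemClass.coe_one] at e'
          rw [conj_eq_one_iff] at e'
          exact Subtype.ext e')
        have h2 := congrArg Subtype.val h1
        exact mul_inv_eq_iff_eq_mul.1 h2
      rcases h.eq_one_or_eq_invol hconst v.2.2 hcomm with e | e
      · exact hv1 (Subtype.ext e)
      · exact hζ (e ▸ gen_mono hA₁S v.2.1)
    · rw [hk]
      exact le_trans (by norm_num) (Nat.pow_le_pow_right (by norm_num) hk2)
  have h12 := h.card_kern_mul_le hTA₁ hA₁₂ hA₂S
  have h2S := h.card_kern_mul_le hTA₂ hA₂S subset_rfl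
  have hSV := h.two_mul_card_kern_le hζ
  have hV : Nat.card (fiberGroup ζ h.quot.invol) ≤ 2 ^ (ℓ + 4) := by
    refine Nat.le_of_mul_le_mul_right (h.quot.card_fiberGroup_mul_le.trans ?_)
      (show 0 < 2 ^ Nat.card Q by positivity)
    rw [← pow_add]
    exact Nat.pow_le_pow_right (by norm_num) (by omega)
  rw [show A₂.card - A₁.card = ℓ by omega] at h12
  rw [show S.card - A₂.card = 1 by omega, pow_one] at h2S
  have hpow : 2 ^ (ℓ + 4) = 16 * 2 ^ ℓ := by rw [pow_add]; ring
  rw [hpow] at hV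
  have hN₁' : 4 * 2 ^ ℓ ≤ Nat.card (h.kern A₁) * 2 ^ ℓ := Nat.mul_le_mul_right _ hN₁
  have hA₂ζ : ζ ∉ h.kern A₂ := fun hm => hζ (gen_mono hA₂S hm.1)
  have hodd := (h.invol_mem_iff_even hconst h.kern_le (by omega)
    fun g hg v => h.conj_mem_kern h.sub hg).not.1 fun hm => hζ hm.1
  have hWV : adjoinInvol (h.kern A₂) h.kern_le ≤ fiberGroup ζ h.quot.invol := by
    rintro v (hv | hv)
    · exact hv.2
    · have := mul_mem hv.2 (invol_mem_fiberGroup (hζ := h.quot.invol))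
      rw [mul_assoc, h.quot.invol, mul_one] at this
      exact this
  have hle := card_adjoinInvol_le (h.kern_le (A := A₂))
  have hlt : h.kern A₂ < adjoinInvol (h.kern A₂) h.kern_le := by
    refine lt_of_le_of_ne (fun v hv => Or.inl hv) fun heq => hA₂ζ ?_
    rw [heq]
    right
    rw [h.quot.invol]
    exact one_mem _
  have hge := two_mul_card_le_of_lt hlt
  refine hodd ((h.invol_mem_iff_even hconst hWV (by omega) ?_).1 (Or.inr ?_))
  · rintro g hg v (hv | hv)
    · exact Or.inl (h.conj_mem_kern hTA₂ hg hv)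
    · right
      have h1 := h.conj_mem_kern hTA₂ hg hv
      have h2 := (h.commute_invol hg).inv_left.eq
      rwa [mul_assoc, h2, ← mul_assoc, mul_assoc g v]
  · rw [h.quot.invol]
    exact one_mem _

/-- A two-group of permutations fixing a point of `Q` has order at most `2 ^ (|Q| - 2)`. -/
theorem card_le_of_isPGroup_two [Finite Q] {P : Subgroup (Perm Q)} (hP : IsPGroup 2 P) {q₀ : Q}
    (hfix : ∀ g ∈ P, g q₀ = q₀) (hQ : 2 ≤ Nat.card Q) : Nat.card P ≤ 2 ^ (Nat.card Q - 2) := by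
  classical
  have := Fintype.ofFinite Q
  obtain ⟨k, hk⟩ := IsPGroup.iff_card.1 hP
  let D := {q : Q // q ≠ q₀}
  let φ : P →* Perm D :=
    { toFun := fun g => g.1.subtypePerm fun q => by
        rw [not_iff_not]
        conv_lhs => rw [← hfix g.1 g.2]
        exact g.1.injective.eq_iff
      map_one' := by ext; rfl
      map_mul' := fun g g' => by ext; rfl }
  have hφ : Function.Injective φ := by
    intro g g' hgg
    ext q
    by_cases hq : q = q₀
    · rw [hq, hfix _ g.2, hfix _ g'.2]
    · exact congrArg Subtype.val (congrArg (fun f : Perm D => f ⟨q, hq⟩) hgg)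
  have hdvd := Subgroup.card_dvd_of_injective φ hφ
  have hD : Fintype.card D = Nat.card Q - 1 := by
    rw [Fintype.card_subtype_compl, Fintype.card_subtype_eq, Nat.card_eq_fintype_card]
  rw [hk, Nat.card_eq_fintype_card, Fintype.card_perm, hD] at hdvd
  have hne : (Nat.card Q - 1).factorial ≠ 0 := Nat.factorial_ne_zero _
  rw [padicValNat_dvd_iff_le hne] at hdvd
  have hval := sub_one_mul_padicValNat_factorial (p := 2) (Nat.card Q - 1)
  have hdig : 0 < (Nat.digits 2 (Nat.card Q - 1)).sum := by
    rcases Nat.eq_zero_or_pos (Nat.digits 2 (Nat.card Q - 1)).sum with h0 | h0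
    · exfalso
      have h1 := Nat.getLast_digit_ne_zero 2 (m := Nat.card Q - 1) (by omega)
      exact h1 (List.sum_eq_zero_iff.1 h0 _ (List.getLast_mem _))
    · exact h0
  rw [hk]
  exact Nat.pow_le_pow_right (by norm_num) (by omega)

theorem commute_of_card_le_four {Γ : Type} [Group Γ] [Finite Γ] {H : Subgroup Γ} {a b : Γ}
    (ha : a * a = 1) (hb : b * b = 1) (haH : a ∈ H) (hbH : b ∈ H) (hH : Nat.card H ≤ 4) :
    Commute a b := by
  classical
  by_contra hab
  have hne : a * b ≠ b * a := hab
  have ha1 : a ≠ 1 := fun h => hne (by simp [h])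
  have hb1 : b ≠ 1 := fun h => hne (by simp [h])
  have hab1 : a ≠ b := fun h => hne (by simp [h])
  have h1 : a * b ≠ 1 := fun h => hab1 (by
    have := congrArg (a * ·) h
    simpa [← mul_assoc, ha] using this.symm)
  have h2 : b * a ≠ 1 := fun h => hab1 (by
    have := congrArg (b * ·) h
    simpa [← mul_assoc, hb] using this)
  have hsub : (({1, a, b, a * b, b * a} : Finset Γ) : Set Γ) ⊆ H := by
    intro x hx
    simp only [Finset.coe_insert, Finset.coe_singleton, Set.mem_insert_iff,
      Set.mem_singleton_iff] at hx
    rcases hx with rfl | rfl | rfl | rfl | rfl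
    · exact one_mem _
    · exact haH
    · exact hbH
    · exact mul_mem haH hbH
    · exact mul_mem hbH haH
  have hcard := Set.ncard_le_ncard hsub
  rw [Set.ncard_coe_finset] at hcard
  have h5 : ({1, a, b, a * b, b * a} : Finset Γ).card = 5 := by
    simp [Finset.card_insert_of_notMem, ha1.symm, hb1.symm, hab1, h1.symm, h2.symm, hne, ha1, hb1]
  have h6 : (H : Set Γ).ncard = Nat.card H := rfl
  omega

theorem Lift.isInvol_swap [Finite X] [Finite Q] [DecidableEq X] (h : Lift ζ p σ σ' S T)
    (hζ : ζ ∉ gen σ S) (hX : 7 ≤ Nat.card X) (hS : S.card + 3 = Nat.card X) :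
    ∃ x, ζ x ≠ x ∧ ζ = swap x (ζ x) := by
  obtain ⟨f, hf, q, q', hq, hq'⟩ := h.exists_nonconst hζ hX hS
  have hU : ∀ {C : Type} {col : Q → C}, (∀ i ∈ S, ∀ q, col (σ' i q) = col q) →
      T.card + (Set.range col).ncard ≤ Nat.card Q :=
    fun hcol => h.irr'.card_add_ncard_le fun i hi => hcol i (h.sub hi)
  have h3 := h.card_add_card_lt hζ
  have htwo : 2 ≤ (Set.range f).ncard := by
    rw [← Set.ncard_pair (a := f q) (b := f q') (by simp [hq, hq'])]
    refine Set.ncard_le_ncard ?_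
    rintro _ (rfl | rfl) <;> exact ⟨_, rfl⟩
  have hTQ := hU hf
  obtain ⟨x₀, hx₀, hfix⟩ := h.exists_fixed_fiber hζ (by omega)
  have hrest : ∀ f : Q → Prop, (∀ i ∈ S, ∀ q, f (σ' i q) = f q) → ∀ q₁ q₂, q₁ ≠ p x₀ → q₂ ≠ p x₀ →
      f q₁ → f q₂ := by
    intro f hf q₁ q₂ h1 h2 hfq
    by_contra hfq'
    have h4 := hU (col := fun q => (f q, q = p x₀)) fun i hi q => by
      rw [hf i hi]
      congr 1
      rw [← (σ' i).injective.eq_iff (a := q), hfix i hi]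
    have h5 : ({(f q₁, False), (f q₂, False), (f (p x₀), True)} : Finset (Prop × Prop)).card = 3 := by
      rw [Finset.card_eq_three]
      exact ⟨_, _, _, by simp [hfq, hfq'], by simp, by simp, rfl⟩
    have h6 : 3 ≤ (Set.range fun q => (f q, q = p x₀)).ncard := by
      rw [← h5, ← Set.ncard_coe_finset]
      refine Set.ncard_le_ncard ?_
      intro c hc
      simp only [Finset.coe_insert, Finset.coe_singleton, Set.mem_insert_iff,
        Set.mem_singleton_iff] at hc
      rcases hc with rfl | rfl | rfl
      · exact ⟨q₁, by simp [h1]⟩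
      · exact ⟨q₂, by simp [h2]⟩
      · exact ⟨p x₀, by simp⟩
    omega
  refine ⟨x₀, hx₀, ?_⟩
  by_cases hother : ∃ y, p y ≠ p x₀ ∧ ζ y ≠ y
  · exfalso
    obtain ⟨y, hy, hζy⟩ := hother
    obtain ⟨mv, hmv, hmvinv, -⟩ := h.exists_colouring (col := fun x => ζ x ≠ x)
      (fun x => by
        rw [Ne, ζ.injective.eq_iff])
      (fun i hi x => by
        rw [Ne, ← Perm.mul_apply, ← (h.comm i hi).eq, Perm.mul_apply, (σ i).injective.eq_iff])
    have hmoved : ∀ x, ζ x ≠ x := by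
      intro x
      by_cases hx : p x = p x₀
      · have := hmv x₀
        rw [← hx, hmv x] at this
        exact this.mpr hx₀
      · have := hrest mv hmvinv (p y) (p x) hy hx (by rw [hmv]; exact hζy)
        rw [hmv] at this
        exact this
    have hXQ := h.quot.card_le_two_mul
    obtain ⟨k, hk⟩ := h.exists_pow_map_eq hζ (by omega)
    have hP : IsPGroup 2 (gen σ' T) := by
      rintro ⟨g', hg'⟩
      refine ⟨k, Subtype.ext ?_⟩
      obtain ⟨g, hg, hgg⟩ := h.pull h.sub hg'
      have hgpow : ∀ j : ℕ, ∀ x, p ((g ^ j) x) = (g' ^ j) (p x) := by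
        intro j
        induction j with
        | zero => exact fun _ => rfl
        | succ j ih => exact fun x => by simp [pow_succ, ih, hgg]
      rw [SubmonoidClass.coe_pow, OneMemClass.coe_one]
      ext q
      obtain ⟨x, rfl⟩ := h.quot.surj q
      rw [← hgpow, hk g (gen_mono h.sub hg) x (hmoved x)]
      rfl
    have hPfix : ∀ g ∈ gen σ' T, g (p x₀) = p x₀ := by
      intro g hg
      have := apply_eq_of_mem_gen (col := fun q => q = p x₀) (fun i hi q => by
        conv_lhs => rw [← hfix i (h.sub hi)]
        rw [(σ' i).injective.eq_iff]) hg (p x₀)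
      exact this.mpr rfl
    have hPcard := card_le_of_isPGroup_two hP hPfix (by omega)
    have hcomm : ∀ i ∈ T, ∀ j ∈ T, Commute (σ' i) (σ' j) := by
      intro i hi j hj
      by_cases hij : i = j
      · rw [hij]
      have h1 := h.irr'.card_gen_mul_le (A := {i, j}) (by
        intro l hl
        rcases Finset.mem_insert.1 hl with rfl | hl
        · exact hi
        · rw [Finset.mem_singleton.1 hl]
          exact hj)
      rw [Finset.card_pair hij] at h1
      have h2 : 2 ≤ T.card := by
        rw [← Finset.card_pair hij]
        refine Finset.card_le_card ?_
        intro l hl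
        rcases Finset.mem_insert.1 hl with rfl | hl
        · exact hi
        · rw [Finset.mem_singleton.1 hl]
          exact hj
      refine commute_of_card_le_four (h.irr'.sq i hi) (h.irr'.sq j hj)
        (mem_gen (A := {i, j}) (by simp)) (mem_gen (by simp)) ?_
      refine Nat.le_of_mul_le_mul_right ((h1.trans hPcard).trans ?_)
        (show 0 < 2 ^ (T.card - 2) by positivity)
      rw [show (4 : ℕ) = 2 ^ 2 by norm_num, ← pow_add]
      exact Nat.pow_le_pow_right (by norm_num) (by omega)
    have hPcomm : ∀ a ∈ gen σ' T, ∀ b ∈ gen σ' T, Commute a b := fun a ha b hb =>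
      commute_of_mem_gen (fun i hi =>
        (commute_of_mem_gen (fun j hj => hcomm j hj i hi) hb).symm) ha
    have htrans : ∀ r, r ≠ p x₀ → ∃ g ∈ gen σ' T, g (p y) = r := by
      intro r hr
      refine hrest (fun r => ∃ g ∈ gen σ' T, g (p y) = r) ?_ (p y) r hy hr ⟨1, one_mem _, rfl⟩
      intro i hi r
      refine propext ⟨?_, ?_⟩
      · rintro ⟨g, hg, hgr⟩
        refine ⟨(σ' i)⁻¹ * g, mul_mem (inv_mem (h.gen' i hi)) hg, ?_⟩
        rw [Perm.mul_apply, hgr, perm_inv_apply]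
      · rintro ⟨g, hg, hgr⟩
        exact ⟨σ' i * g, mul_mem (h.gen' i hi) hg, by rw [Perm.mul_apply, hgr]⟩
    have hle : Nat.card (gen σ' T) ≤ Nat.card {r : Q // r ≠ p x₀} := by
      refine Nat.card_le_card_of_injective (fun g => ⟨g.1 (p y), fun e => hy ?_⟩) ?_
      · rw [← hPfix g.1 g.2] at e
        exact g.1.injective e
      · intro g g' hgg
        have hgg' : g.1 (p y) = g'.1 (p y) := congrArg Subtype.val hgg
        ext r
        by_cases hr : r = p x₀
        · rw [hr, hPfix _ g.2, hPfix _ g'.2]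
        · obtain ⟨a, ha, rfl⟩ := htrans r hr
          rw [← Perm.mul_apply, ← Perm.mul_apply, (hPcomm _ g.2 a ha).eq,
            (hPcomm _ g'.2 a ha).eq, Perm.mul_apply, hgg', Perm.mul_apply]
    have hcompl : Nat.card {r : Q // r ≠ p x₀} + 1 = Nat.card Q := by
      classical
      have := Fintype.ofFinite Q
      rw [Nat.card_eq_fintype_card, Fintype.card_subtype_compl, Fintype.card_subtype_eq,
        Nat.card_eq_fintype_card]
      have : 0 < Fintype.card Q := Fintype.card_pos_iff.2 ⟨p x₀⟩
      omega
    have hge := h.irr'.card_gen_mul_le (Finset.empty_subset T)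
    have hpos : 0 < Nat.card (gen σ' ∅) := Nat.card_pos
    have hge' : 2 ^ T.card ≤ Nat.card (gen σ' T) :=
      le_trans (Nat.le_mul_of_pos_left _ hpos) hge
    have hbig : ∀ k, 2 ≤ k → k + 1 < 2 ^ k := by
      intro k hk
      induction k, hk using Nat.le_induction with
      | base => norm_num
      | succ k _ ih => rw [pow_succ]; omega
    have := hbig T.card (by omega)
    omega
  · push Not at hother
    ext y
    rw [Equiv.swap_apply_def]
    split_ifs with h1 h2
    · rw [h1]
    · rw [h2, invol_apply h.quot.invol]
    · refine hother y fun e => ?_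
      rcases (h.quot.fiber x₀ y).1 e.symm with e | e
      · exact h1 e
      · exact h2 e

/-- The first member of an irredundant family of maximal length is a transposition. -/
theorem Irredundant.exists_swap_eq_zero [Finite X] [DecidableEq X] {r : ℕ}
    (hσ : Irredundant σ (Finset.range r)) (hX : 7 ≤ Nat.card X) (hr : r + 1 = Nat.card X) :
    ∃ x y, x ≠ y ∧ σ 0 = swap x y := by
  have hsub : Finset.Ico 2 r ⊆ Finset.range r := fun i hi => by
    simp only [Finset.mem_Ico, Finset.mem_range] at *
    omega
  have h0 : 0 ∈ Finset.range r := Finset.mem_range.2 (by omega)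
  obtain ⟨Q, hQ, p, σ', T, h⟩ := exists_lift (hσ.sq 0 h0) (hσ.mono hsub) fun i hi =>
    (hσ.comm 0 h0 i (hsub hi) (by simpa using (Finset.mem_Ico.1 hi).1)).symm
  obtain ⟨x, hx, hswap⟩ := h.isInvol_swap (hσ.notMem_gen hsub h0 (by simp)) hX
    (by rw [Nat.card_Ico]; omega)
  exact ⟨x, σ 0 x, hx.symm, hswap⟩

end FirstGenerator

section Chain

variable {X : Type}

theorem commute_apply {g k : Perm X} (h : Commute g k) (x : X) : g (k x) = k (g x) :=
  congrArg (fun f : Perm X => f x) h.eq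

theorem fix_or_swap_of_commute [DecidableEq X] {g : Perm X} {a b : X} (hab : a ≠ b)
    (h : Commute g (swap a b)) : (g a = a ∧ g b = b) ∨ (g a = b ∧ g b = a) := by
  have h1 := commute_apply h a
  rw [Equiv.swap_apply_left] at h1
  by_cases ha : g a = a
  · exact Or.inl ⟨ha, by rw [h1, ha, Equiv.swap_apply_left]⟩
  by_cases hb : g a = b
  · exact Or.inr ⟨hb, by rw [h1, hb, Equiv.swap_apply_right]⟩
  · rw [Equiv.swap_apply_of_ne_of_ne ha hb] at h1
    exact absurd (g.injective h1).symm hab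

/-- A permutation commuting with the transpositions of a path with at least three vertices fixes
all the vertices. -/
theorem fix_of_commute_path [DecidableEq X] {g : Perm X} {x : ℕ → X} {k : ℕ} (hk : 2 ≤ k)
    (hinj : Set.InjOn x (Set.Iic k)) (h : ∀ i < k, Commute g (swap (x i) (x (i + 1)))) :
    ∀ i ≤ k, g (x i) = x i := by
  have hne : ∀ i ≤ k, ∀ j ≤ k, i ≠ j → x i ≠ x j := fun i hi j hj hij e => hij (hinj hi hj e)
  have hedge : ∀ i < k, (g (x i) = x i ∧ g (x (i + 1)) = x (i + 1)) ∨
      (g (x i) = x (i + 1) ∧ g (x (i + 1)) = x i) := fun i hi =>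
    fix_or_swap_of_commute (hne i hi.le (i + 1) hi (by omega)) (h i hi)
  have hstraight : ∀ i < k, g (x i) = x i ∧ g (x (i + 1)) = x (i + 1) := by
    intro i hi
    refine (hedge i hi).resolve_right ?_
    rintro ⟨h1, h2⟩
    rcases Nat.lt_or_ge (i + 1) k with hlt | hge
    · rcases hedge (i + 1) hlt with h3 | h3
      · exact hne i (by omega) (i + 1) (by omega) (by omega) (h2.symm.trans h3.1)
      · exact hne i (by omega) (i + 2) (by omega) (by omega) (h2.symm.trans h3.1)
    · obtain ⟨j, rfl⟩ : ∃ j, i = j + 1 := ⟨i - 1, by omega⟩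
      rcases hedge j (by omega) with h3 | h3
      · exact hne (j + 2) (by omega) (j + 1) (by omega) (by omega) (h1.symm.trans h3.2)
      · exact hne (j + 2) (by omega) j (by omega) (by omega) (h1.symm.trans h3.2)
  intro i hi
  rcases Nat.lt_or_ge i k with hlt | hge
  · exact (hstraight i hlt).1
  · obtain ⟨j, rfl⟩ : ∃ j, i = j + 1 := ⟨i - 1, by omega⟩
    exact (hstraight j (by omega)).2

/-- A transitive irredundant family of length one less than the degree, in which initial and final
segments separated by a gap generate subgroups with trivial intersection. -/
structure IsMaximal (σ : ℕ → Perm X) (r : ℕ) : Prop where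
  irr : Irredundant σ (Finset.range r)
  card : r + 1 = Nat.card X
  seven_le : 7 ≤ Nat.card X
  trans : ∀ x y, ∃ g ∈ gen σ (Finset.range r), g x = y
  inter : ∀ j, gen σ (Finset.range (j + 1)) ⊓ gen σ (Finset.Ico (j + 2) r) = ⊥

namespace IsMaximal

variable {σ : ℕ → Perm X} {r j : ℕ}

theorem commute (h : IsMaximal σ r) {i k : ℕ} (hk : k < r) (hik : i + 2 ≤ k) :
    Commute (σ i) (σ k) :=
  h.irr.comm i (Finset.mem_range.2 (by omega)) k (Finset.mem_range.2 hk) hik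

theorem apply_apply (h : IsMaximal σ r) {i : ℕ} (hi : i < r) (x : X) : σ i (σ i x) = x :=
  invol_apply (h.irr.sq i (Finset.mem_range.2 hi)) x

/-- A proper nonempty subset is not invariant. -/
theorem exists_apply_notMem (h : IsMaximal σ r) {A : Finset X} (hA : A.Nonempty)
    (hcard : A.card < Nat.card X) : ∃ i < r, ∃ x ∈ A, σ i x ∉ A := by
  by_contra! hinv
  obtain ⟨a, ha⟩ := hA
  have hall : ∀ y, y ∈ A := by
    intro y
    obtain ⟨g, hg, rfl⟩ := h.trans a y
    have := apply_eq_of_mem_gen (col := fun x => x ∈ A) (fun i hi x => propext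
      ⟨fun hx => by
        have := hinv i (Finset.mem_range.1 hi) _ hx
        rwa [h.apply_apply (Finset.mem_range.1 hi)] at this,
        fun hx => hinv i (Finset.mem_range.1 hi) x hx⟩) hg a
    exact this.mpr ha
  have : (A : Set X) = Set.univ := Set.eq_univ_of_forall hall
  rw [← Set.ncard_univ, ← this, Set.ncard_coe_finset] at hcard
  exact lt_irrefl _ hcard

theorem eq_one_of_fix [Finite X] (h : IsMaximal σ r) {g : Perm X} (hj : j < r)
    (hg : g ∈ gen σ (Finset.range (j + 1))) (hsq : g * g = 1) {F : Finset X}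
    (hF : j + 2 ≤ F.card) (hgF : ∀ x ∈ F, g x = x)
    (hfix : ∀ i, j + 2 ≤ i → i < r → ∀ x ∈ F, σ i x = x) : g = 1 := by
  classical
  by_contra hne
  obtain ⟨y, hy⟩ : ∃ y, g y ≠ y := by
    by_contra! hcon
    exact hne (Perm.ext hcon)
  have hyF : y ∉ F := fun hm => hy (hgF y hm)
  have hnot : g ∉ gen σ (Finset.Ico (j + 2) r) := by
    intro hm
    have : g ∈ gen σ (Finset.range (j + 1)) ⊓ gen σ (Finset.Ico (j + 2) r) := ⟨hg, hm⟩
    rw [h.inter, Subgroup.mem_bot] at this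
    exact hne this
  let col : X → Option X := fun x => if x ∈ F then some x else none
  have hcol : ∀ k : Perm X, (∀ x ∈ F, k x = x) → ∀ x, col (k x) = col x := by
    intro k hk x
    by_cases hx : x ∈ F
    · rw [hk x hx]
    · have hkx : k x ∉ F := fun hm => hx (by
        have := k.injective (hk _ hm)
        rwa [this] at hm)
      simp [col, hx, hkx]
  have hsub : Finset.Ico (j + 2) r ⊆ Finset.range r := fun i hi => by
    simp only [Finset.mem_Ico, Finset.mem_range] at *
    omega
  have hbound := (h.irr.mono hsub).card_add_ncard_lt hsq hnot (fun i hi => by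
    refine (commute_of_mem_gen (fun k hk => ?_) hg).symm
    have := Finset.mem_Ico.1 hi
    have := Finset.mem_range.1 hk
    exact h.commute (by omega) (by omega)) (hcol g hgF) (fun i hi =>
      hcol (σ i) (hfix i (Finset.mem_Ico.1 hi).1 (Finset.mem_Ico.1 hi).2))
  have him : F.card + 1 ≤ (Set.range col).ncard := by
    have h1 : (insert none (F.image some)).card = F.card + 1 := by
      rw [Finset.card_insert_of_notMem (by simp), Finset.card_image_of_injective _
        (Option.some_injective _)]
    rw [← h1, ← Set.ncard_coe_finset]
    refine Set.ncard_le_ncard ?_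
    intro c hc
    rw [Finset.mem_coe, Finset.mem_insert, Finset.mem_image] at hc
    rcases hc with rfl | ⟨x, hx, rfl⟩
    · exact ⟨y, by simp [col, hyF]⟩
    · exact ⟨x, by simp [col, hx]⟩
  rw [Nat.card_Ico] at hbound
  have := h.card
  omega

/-- A generator that moves at most one point of a set invariant under the other generators is a
transposition. -/
theorem eq_swap_of_fix [Finite X] [DecidableEq X] (h : IsMaximal σ r) (hj : j < r) {A : Finset X}
    (hA : A.card = j + 1) {a b : X} (ha : a ∈ A) (hb : b ∈ A) (hab : b ≠ a)
    (hpres : ∀ i < r, i ≠ j → ∀ x ∈ A, σ i x ∈ A)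
    (hfix : ∀ i, j + 2 ≤ i → i < r → ∀ x ∈ A, σ i x = x)
    (hj' : ∀ x ∈ A, x ≠ a → σ j x = x) (hswap : swap b a ∈ gen σ (Finset.range j)) :
    σ j a ∉ A ∧ σ j = swap a (σ j a) := by
  have hsa : σ j a ∉ A := by
    obtain ⟨i, hi, x, hx, hix⟩ := h.exists_apply_notMem ⟨a, ha⟩ (by have := h.card; omega)
    have hij : i = j := by
      by_contra hne
      exact hix (hpres i hi hne x hx)
    subst hij
    have hxa : x = a := by
      by_contra hne
      exact hix (by rwa [hj' x hx hne])
    rwa [hxa] at hix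
  refine ⟨hsa, ?_⟩
  set s := σ j a with hs
  have hjs : σ j s = a := h.apply_apply hj a
  have hjb : σ j b = b := hj' b hb hab
  have hjm : σ j ∈ gen σ (Finset.range (j + 1)) := mem_gen (by simp)
  have hba : swap b a ∈ gen σ (Finset.range (j + 1)) :=
    gen_mono (Finset.range_subset_range.2 (Nat.le_succ j)) hswap
  have hbs : swap b s ∈ gen σ (Finset.range (j + 1)) := by
    have : swap b s = σ j * swap b a * (σ j)⁻¹ := by
      rw [Equiv.mul_swap_eq_swap_mul, hjb, ← hs, mul_inv_cancel_right]
    rw [this]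
    exact mul_mem (mul_mem hjm hba) (inv_mem hjm)
  have hsb : s ≠ b := fun e => hsa (e ▸ hb)
  have hsa' : s ≠ a := fun e => hsa (e ▸ ha)
  have has : swap a s ∈ gen σ (Finset.range (j + 1)) := by
    have : swap a s = swap b a * swap b s * (swap b a)⁻¹ := by
      rw [Equiv.mul_swap_eq_swap_mul, Equiv.swap_apply_left,
        Equiv.swap_apply_of_ne_of_ne hsb hsa', mul_inv_cancel_right]
    rw [this]
    exact mul_mem (mul_mem hba hbs) (inv_mem hba)
  have hcomm : Commute (σ j) (swap a s) := commute_swap (by rw [← hs, hjs, Equiv.swap_comm])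
  have h1 : σ j * swap a s = 1 := by
    refine h.eq_one_of_fix hj (mul_mem hjm has) ?_ (F := insert s A) ?_ ?_ ?_
    · rw [mul_assoc, ← mul_assoc (swap a s), ← hcomm.eq, mul_assoc, Equiv.swap_mul_self, mul_one,
        h.irr.sq j (Finset.mem_range.2 hj)]
    · rw [Finset.card_insert_of_notMem hsa, hA]
    · intro x hx
      rw [Perm.mul_apply]
      rcases Finset.mem_insert.1 hx with rfl | hx
      · rw [Equiv.swap_apply_right, ← hs]
      · by_cases hxa : x = a
        · rw [hxa, Equiv.swap_apply_left, hjs]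
        · rw [Equiv.swap_apply_of_ne_of_ne hxa (ne_of_mem_of_not_mem hx hsa), hj' x hx hxa]
    · intro i hi hir x hx
      rcases Finset.mem_insert.1 hx with rfl | hx
      · rw [hs, ← commute_apply (h.commute hir hi), hfix i hi hir a ha]
      · exact hfix i hi hir x hx
  rw [mul_eq_one_iff_eq_inv.1 h1, Equiv.swap_inv]

theorem apply_mem_pair [DecidableEq X] (h : IsMaximal σ r) {a b : X} (hab : a ≠ b)
    (h0 : σ 0 = swap a b) {i : ℕ} (hi : 2 ≤ i) (hir : i < r) :
    (σ i a = a ∧ σ i b = b) ∨ (σ i a = b ∧ σ i b = a) :=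
  fix_or_swap_of_commute hab (h0 ▸ (h.commute hir (by omega)).symm)

/-- The second generator does not move both points of the support of the first one outside of
this support. -/
theorem apply_mem_or_apply_mem [Finite X] [DecidableEq X] (h : IsMaximal σ r) {a b : X}
    (hab : a ≠ b) (h0 : σ 0 = swap a b) : (σ 1 a = a ∨ σ 1 a = b) ∨ (σ 1 b = a ∨ σ 1 b = b) := by
  by_contra! hcon
  have hr := h.card
  have hr7 := h.seven_le
  set c := σ 1 a with hc
  set d := σ 1 b with hd
  obtain ⟨⟨hca, hcb⟩, hda, hdb⟩ := hcon
  have hcd : c ≠ d := fun e => hab ((σ 1).injective e)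
  have h1a : ∀ x, σ 1 (σ 1 x) = x := h.apply_apply (by omega)
  have hcd1 : σ 1 * σ 0 * σ 1 = swap c d := by
    rw [h0, Equiv.mul_swap_eq_swap_mul, mul_assoc, h.irr.sq 1 (Finset.mem_range.2 (by omega)),
      mul_one]
  set w := σ 0 * (σ 1 * σ 0 * σ 1) with hw
  have hwa : w a = b := by
    rw [hw, hcd1, h0, Perm.mul_apply, Equiv.swap_apply_of_ne_of_ne hca.symm hda.symm,
      Equiv.swap_apply_left]
  have hwb : w b = a := by
    rw [hw, hcd1, h0, Perm.mul_apply, Equiv.swap_apply_of_ne_of_ne hcb.symm hdb.symm,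
      Equiv.swap_apply_right]
  have hwc : w c = d := by
    rw [hw, hcd1, h0, Perm.mul_apply, Equiv.swap_apply_left,
      Equiv.swap_apply_of_ne_of_ne hda hdb]
  have hwd : w d = c := by
    rw [hw, hcd1, h0, Perm.mul_apply, Equiv.swap_apply_right,
      Equiv.swap_apply_of_ne_of_ne hca hcb]
  have hwx : ∀ x, x ≠ a → x ≠ b → x ≠ c → x ≠ d → w x = x := by
    intro x h1 h2 h3 h4
    rw [hw, hcd1, h0, Perm.mul_apply, Equiv.swap_apply_of_ne_of_ne h3 h4,
      Equiv.swap_apply_of_ne_of_ne h1 h2]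
  have hcases : ∀ x, x = a ∨ x = b ∨ x = c ∨ x = d ∨ (x ≠ a ∧ x ≠ b ∧ x ≠ c ∧ x ≠ d) := by
    intro x
    tauto
  have hsq : w * w = 1 := by
    ext x
    rw [Perm.mul_apply]
    rcases hcases x with rfl | rfl | rfl | rfl | ⟨h1, h2, h3, h4⟩
    · rw [hwa, hwb]; rfl
    · rw [hwb, hwa]; rfl
    · rw [hwc, hwd]; rfl
    · rw [hwd, hwc]; rfl
    · rw [hwx x h1 h2 h3 h4, hwx x h1 h2 h3 h4]; rfl
  set S := Finset.Ico 3 r with hS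
  have hsub : S ⊆ Finset.range r := fun i hi => by
    simp only [hS, Finset.mem_Ico, Finset.mem_range] at *
    omega
  have hc0 : ∀ i ∈ S, Commute (σ i) (σ 0) := fun i hi => by
    have := Finset.mem_Ico.1 hi
    exact (h.commute this.2 (by omega)).symm
  have hc1 : ∀ i ∈ S, Commute (σ i) (σ 1) := fun i hi => by
    have := Finset.mem_Ico.1 hi
    exact (h.commute this.2 (by omega)).symm
  have hcw : ∀ i ∈ S, Commute (σ i) w := fun i hi =>
    (hc0 i hi).mul_right (((hc1 i hi).mul_right (hc0 i hi)).mul_right (hc1 i hi))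
  obtain ⟨Q, hQ, p, σ', T, L⟩ := exists_lift hsq (h.irr.mono hsub) hcw
  have hker : L.kern S = ⊥ := by
    rw [eq_bot_iff]
    rintro v ⟨hvS, hv⟩
    have hv0 : Commute v (swap a b) := h0 ▸ commute_of_mem_gen hc0 hvS
    have hv1 : Commute v (σ 1) := commute_of_mem_gen hc1 hvS
    have hvx : ∀ x, x ≠ a → x ≠ b → x ≠ c → x ≠ d → v x = x := by
      intro x h1 h2 h3 h4
      have := hv x
      rwa [hwx x h1 h2 h3 h4, or_self] at this
    rcases fix_or_swap_of_commute hab hv0 with ⟨h1, h2⟩ | ⟨h1, h2⟩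
    · rw [Subgroup.mem_bot]
      ext x
      rcases hcases x with rfl | rfl | rfl | rfl | ⟨h3, h4, h5, h6⟩
      · exact h1
      · exact h2
      · rw [hc, commute_apply hv1, h1]; rfl
      · rw [hd, commute_apply hv1, h2]; rfl
      · exact hvx x h3 h4 h5 h6
    · exfalso
      have hvw : v = w := by
        ext x
        rcases hcases x with rfl | rfl | rfl | rfl | ⟨h3, h4, h5, h6⟩
        · rw [h1, hwa]
        · rw [h2, hwb]
        · rw [hwc, hc, commute_apply hv1, h1]
        · rw [hwd, hd, commute_apply hv1, h2]
        · rw [hwx x h3 h4 h5 h6, hvx x h3 h4 h5 h6]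
      have hm0 : σ 0 ∈ gen σ (Finset.range 2) := mem_gen (by simp)
      have hm1 : σ 1 ∈ gen σ (Finset.range 2) := mem_gen (by simp)
      have hmem : v ∈ gen σ (Finset.range (1 + 1)) ⊓ gen σ (Finset.Ico (1 + 2) r) := by
        refine Subgroup.mem_inf.2 ⟨?_, hvS⟩
        rw [hvw]
        exact mul_mem hm0 (mul_mem (mul_mem hm1 hm0) hm1)
      rw [h.inter, Subgroup.mem_bot] at hmem
      rw [hmem] at h1
      exact hab h1
  have hST := L.card_kern_of_card
  rw [hker, Subgroup.card_bot] at hST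
  have hST' : S.card ≤ T.card := by
    by_contra hlt
    have : 2 ^ 1 ≤ 2 ^ (S.card - T.card) := Nat.pow_le_pow_right (by norm_num) (by omega)
    omega
  have hS3 : S.card = r - 3 := by rw [hS, Nat.card_Ico]
  let col : X → Prop × Prop := fun x => (x = a ∨ x = b, x = c ∨ x = d)
  have hcolw : ∀ x, col (w x) = col x := by
    intro x
    rcases hcases x with rfl | rfl | rfl | rfl | ⟨h1, h2, h3, h4⟩
    · rw [hwa]
      simp [col, hcb.symm, hdb.symm, hca.symm, hda.symm]
    · rw [hwb]
      simp [col, hcb.symm, hdb.symm, hca.symm, hda.symm]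
    · rw [hwc]
      simp [col, hcb, hdb, hca, hda]
    · rw [hwd]
      simp [col, hcb, hdb, hca, hda]
    · rw [hwx x h1 h2 h3 h4]
  have hcolS : ∀ i ∈ S, ∀ x, col (σ i x) = col x := by
    intro i hi x
    have hab' := fix_or_swap_of_commute hab (h0 ▸ hc0 i hi)
    have e1 : σ i c = σ 1 (σ i a) := commute_apply (hc1 i hi) a
    have e2 : σ i d = σ 1 (σ i b) := commute_apply (hc1 i hi) b
    have key : ∀ y z u v : X, (σ i y = u ∧ σ i z = v) ∨ (σ i y = v ∧ σ i z = u) →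
        (σ i x = u ∨ σ i x = v ↔ x = y ∨ x = z) := by
      intro y z u v huv
      rw [← (σ i).injective.eq_iff (a := x) (b := y), ← (σ i).injective.eq_iff (a := x) (b := z)]
      rcases huv with ⟨e, e'⟩ | ⟨e, e'⟩
      · rw [e, e']
      · rw [e, e', or_comm]
    refine Prod.ext (propext (key a b a b hab')) (propext (key c d c d ?_))
    rcases hab' with ⟨e, e'⟩ | ⟨e, e'⟩
    · exact Or.inl ⟨by rw [e1, e], by rw [e2, e']⟩
    · exact Or.inr ⟨by rw [e1, e], by rw [e2, e']⟩
  obtain ⟨col', -, hcol', hrange⟩ := L.exists_colouring hcolw hcolS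
  have hbound := L.irr'.card_add_ncard_le fun i hi => hcol' i (L.sub hi)
  have := Fintype.ofFinite X
  have hXcard : Fintype.card X = r + 1 := by rw [← Nat.card_eq_fintype_card, hr]
  have him : 3 ≤ (Set.range col').ncard := by
    rw [hrange]
    obtain ⟨y, hy⟩ : ∃ y, y ∉ ({a, b, c, d} : Finset X) := by
      by_contra! hall
      have h1 : (Finset.univ : Finset X) ⊆ {a, b, c, d} := fun y _ => hall y
      have h2 := (Finset.card_le_card h1).trans Finset.card_le_four
      rw [Finset.card_univ] at h2
      omega
    simp only [Finset.mem_insert, Finset.mem_singleton, not_or] at hy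
    have h5 : ({(True, False), (False, True), (False, False)} : Finset (Prop × Prop)).card = 3 := by
      rw [Finset.card_eq_three]
      exact ⟨_, _, _, by simp, by simp, by simp, rfl⟩
    rw [← h5, ← Set.ncard_coe_finset]
    refine Set.ncard_le_ncard ?_
    intro e he
    simp only [Finset.coe_insert, Finset.coe_singleton, Set.mem_insert_iff,
      Set.mem_singleton_iff] at he
    rcases he with rfl | rfl | rfl
    · exact ⟨a, by simp [col, hca.symm, hda.symm]⟩
    · exact ⟨c, by simp [col, hca, hcb]⟩
    · exact ⟨y, by simp [col, hy]⟩
  have hQcard : Nat.card Q + 2 ≤ Nat.card X := by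
    have := Fintype.ofFinite Q
    classical
    have himage : (Finset.univ : Finset Q) ⊆ (Finset.univ \ {b, d}).image p := by
      intro q _
      obtain ⟨x, rfl⟩ := L.quot.surj q
      by_cases hxb : x = b
      · refine Finset.mem_image.2 ⟨a, by simp [hab, hda.symm], ?_⟩
        rw [hxb, ← hwa, L.quot.map_invol]
      by_cases hxd : x = d
      · refine Finset.mem_image.2 ⟨c, by simp [hcb, hcd], ?_⟩
        rw [hxd, ← hwc, L.quot.map_invol]
      · exact Finset.mem_image.2 ⟨x, by simp [hxb, hxd], rfl⟩
    have h1 := (Finset.card_le_card himage).trans Finset.card_image_le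
    rw [Finset.card_sdiff_of_subset (Finset.subset_univ _), Finset.card_pair hdb.symm,
      Finset.card_univ, Finset.card_univ, hXcard] at h1
    rw [Nat.card_eq_fintype_card, ← hr]
    omega
  omega

/-- The first two generators are transpositions with exactly one common point. -/
theorem exists_path_two [Finite X] [DecidableEq X] (h : IsMaximal σ r) :
    ∃ x : ℕ → X, Set.InjOn x (Set.Iic 2) ∧ ∀ i < 2, σ i = swap (x i) (x (i + 1)) := by
  have hr := h.card
  have hr7 := h.seven_le
  obtain ⟨a, b, hab, h0, ha1, hb1⟩ :
      ∃ a b, a ≠ b ∧ σ 0 = swap a b ∧ σ 1 a = a ∧ σ 1 b ∉ ({a, b} : Finset X) := by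
    obtain ⟨a, b, hab, h0⟩ := h.irr.exists_swap_eq_zero hr7 hr
    obtain ⟨i, hi, x, hx, hix⟩ := h.exists_apply_notMem (A := {a, b}) ⟨a, by simp⟩
      (by rw [Finset.card_pair hab]; omega)
    have hi1 : i = 1 := by
      by_contra hne
      apply hix
      have hpair : (σ i a = a ∧ σ i b = b) ∨ (σ i a = b ∧ σ i b = a) := by
        rcases Nat.eq_zero_or_pos i with rfl | hpos
        · right
          rw [h0]
          exact ⟨Equiv.swap_apply_left _ _, Equiv.swap_apply_right _ _⟩
        · exact h.apply_mem_pair hab h0 (by omega) hi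
      rw [Finset.mem_insert, Finset.mem_singleton] at hx
      rcases hx with rfl | rfl <;> rcases hpair with ⟨e, e'⟩ | ⟨e, e'⟩ <;> simp [e, e']
    subst hi1
    have hinv := h.apply_apply (i := 1) (by omega)
    have key : ∀ u v : X, u ≠ v → σ 1 u ∉ ({u, v} : Finset X) → (σ 1 v = u ∨ σ 1 v = v) →
        σ 1 v = v := by
      intro u v _ h1 h2
      refine h2.resolve_left fun e => h1 ?_
      rw [← e, hinv]
      simp
    have hor := h.apply_mem_or_apply_mem hab h0
    by_cases hb : σ 1 b ∈ ({a, b} : Finset X)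
    · have ha : σ 1 a ∉ ({a, b} : Finset X) := by
        rw [Finset.mem_insert, Finset.mem_singleton] at hx
        rcases hx with rfl | rfl
        · exact hix
        · exact absurd hb hix
      refine ⟨b, a, hab.symm, by rw [h0, Equiv.swap_comm], key a b hab ha ?_, ?_⟩
      · simpa using hb
      · rwa [Finset.pair_comm]
    · refine ⟨a, b, hab, h0, key b a hab.symm (by rwa [Finset.pair_comm]) ?_, hb⟩
      have : ¬ (σ 1 b = a ∨ σ 1 b = b) := by simpa using hb
      tauto
  have hbnot : σ 1 b ≠ a ∧ σ 1 b ≠ b := by simpa using hb1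
  have hstep := h.eq_swap_of_fix (j := 1) (by omega) (A := {a, b}) (Finset.card_pair hab)
    (a := b) (b := a) (by simp) (by simp) hab
    (by
      intro i hi hi1 x hx
      have hpair : (σ i a = a ∧ σ i b = b) ∨ (σ i a = b ∧ σ i b = a) := by
        rcases Nat.eq_zero_or_pos i with rfl | hpos
        · right
          rw [h0]
          exact ⟨Equiv.swap_apply_left _ _, Equiv.swap_apply_right _ _⟩
        · exact h.apply_mem_pair hab h0 (by omega) hi
      rw [Finset.mem_insert, Finset.mem_singleton] at hx
      rcases hx with rfl | rfl <;> rcases hpair with ⟨e, e'⟩ | ⟨e, e'⟩ <;> simp [e, e'])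
    (by
      intro i hi hir x hx
      rcases h.apply_mem_pair hab h0 (by omega) hir with ⟨e, e'⟩ | ⟨e, e'⟩
      · rw [Finset.mem_insert, Finset.mem_singleton] at hx
        rcases hx with rfl | rfl
        · exact e
        · exact e'
      · exfalso
        have h1 := commute_apply (h.commute hir hi).symm a
        rw [ha1, e] at h1
        exact hbnot.2 h1.symm)
    (by
      intro x hx hxb
      rw [Finset.mem_insert, Finset.mem_singleton] at hx
      rw [hx.resolve_right hxb, ha1])
    (by
      rw [← h0]
      exact mem_gen (by simp))
  refine ⟨fun i => if i = 0 then a else if i = 1 then b else σ 1 b, ?_, ?_⟩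
  · intro i hi j hj hij
    simp only [Set.mem_Iic] at hi hj
    have hi' : i = 0 ∨ i = 1 ∨ i = 2 := by omega
    have hj' : j = 0 ∨ j = 1 ∨ j = 2 := by omega
    rcases hi' with rfl | rfl | rfl <;> rcases hj' with rfl | rfl | rfl <;>
      simp [hab, hab.symm, hbnot, hbnot.1.symm, hbnot.2.symm] at hij ⊢
  · intro i hi
    have hi' : i = 0 ∨ i = 1 := by omega
    rcases hi' with rfl | rfl
    · simpa using h0
    · simpa using hstep.2

end IsMaximal

end Chain

theorem swap_apply_mem {X : Type} [DecidableEq X] {A : Finset X} {a b x : X} (ha : a ∈ A)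
    (hb : b ∈ A) (hx : x ∈ A) : swap a b x ∈ A := by
  rw [Equiv.swap_apply_def]
  split_ifs <;> assumption

namespace IsMaximal

variable {X : Type} [DecidableEq X] {σ : ℕ → Perm X} {r j : ℕ} {x : ℕ → X}

theorem fix_path (h : IsMaximal σ r) {k i : ℕ} (hk : 2 ≤ k) (hinj : Set.InjOn x (Set.Iic k))
    (hx : ∀ i < k, σ i = swap (x i) (x (i + 1))) (hi : k + 1 ≤ i) (hir : i < r) :
    ∀ l ≤ k, σ i (x l) = x l :=
  fix_of_commute_path hk hinj fun l hl => hx l hl ▸ (h.commute hir (by omega)).symm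

variable [Finite X]

theorem apply_zero_of_path_two (h : IsMaximal σ r) (hinj : Set.InjOn x (Set.Iic 2))
    (hx : ∀ i < 2, σ i = swap (x i) (x (i + 1))) : σ 2 (x 0) = x 0 ∧ σ 2 (x 1) = x 1 := by
  have hr := h.card
  have hr7 := h.seven_le
  have h0 : σ 0 = swap (x 0) (x 1) := hx 0 (by omega)
  have h1 : σ 1 = swap (x 1) (x 2) := hx 1 (by omega)
  have h01 : x 0 ≠ x 1 := fun e => by simpa using hinj (by simp) (by simp) e
  have h02 : x 0 ≠ x 2 := fun e => by simpa using hinj (by simp) (by simp) e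
  have h12 : x 1 ≠ x 2 := fun e => by simpa using hinj (by simp) (by simp) e
  refine (h.apply_mem_pair h01 h0 le_rfl (by omega)).resolve_right ?_
  rintro ⟨e0, e1⟩
  have hfix : ∀ i, 3 ≤ i → i < r → σ i (x 0) = x 0 ∧ σ i (x 1) = x 1 ∧ σ i (x 2) = x 2 := by
    intro i hi hir
    have := h.fix_path le_rfl hinj hx hi hir
    exact ⟨this 0 (by omega), this 1 (by omega), this 2 (by omega)⟩
  have h2 : ∀ y, σ 2 (σ 2 y) = y := h.apply_apply (by omega)
  set y := σ 2 (x 2) with hy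
  have e3 : σ 2 y = x 2 := h2 _
  have hy0 : x 0 ≠ y := fun e => h12 ((σ 2).injective (e1.trans e))
  have hy1 : x 1 ≠ y := fun e => h02 ((σ 2).injective (e0.trans e))
  have hy2 : x 2 ≠ y := by
    intro e
    obtain ⟨i, hi, z, hz, hiz⟩ := h.exists_apply_notMem (A := {x 0, x 1, x 2}) ⟨x 0, by simp⟩
      (by have := Finset.card_le_three (a := x 0) (b := x 1) (c := x 2); omega)
    apply hiz
    have hi' : i = 0 ∨ i = 1 ∨ i = 2 ∨ 3 ≤ i := by omega
    rcases hi' with rfl | rfl | rfl | hi3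
    · rw [h0]
      exact swap_apply_mem (by simp) (by simp) hz
    · rw [h1]
      exact swap_apply_mem (by simp) (by simp) hz
    · simp only [Finset.mem_insert, Finset.mem_singleton] at hz
      rcases hz with rfl | rfl | rfl
      · simp [e0]
      · simp [e1]
      · rw [← hy, ← e]; simp
    · obtain ⟨f0, f1, f2⟩ := hfix i hi3 hi
      simp only [Finset.mem_insert, Finset.mem_singleton] at hz
      rcases hz with rfl | rfl | rfl
      · simp [f0]
      · simp [f1]
      · simp [f2]
  have hm0 : σ 0 ∈ gen σ (Finset.range (2 + 1)) := mem_gen (by simp)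
  have hm1 : σ 1 ∈ gen σ (Finset.range (2 + 1)) := mem_gen (by simp)
  have hm2 : σ 2 ∈ gen σ (Finset.range (2 + 1)) := mem_gen (by simp)
  have hm03 : swap (x 0) y ∈ gen σ (Finset.range (2 + 1)) := by
    have : swap (x 0) y = σ 2 * σ 1 * (σ 2)⁻¹ := by
      rw [h1, Equiv.mul_swap_eq_swap_mul, e1, ← hy, mul_inv_cancel_right]
    rw [this]
    exact mul_mem (mul_mem hm2 hm1) (inv_mem hm2)
  have hm02 : swap (x 0) (x 2) ∈ gen σ (Finset.range (2 + 1)) := by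
    have : swap (x 0) (x 2) = σ 0 * σ 1 * (σ 0)⁻¹ := by
      rw [h1, Equiv.mul_swap_eq_swap_mul, h0, Equiv.swap_apply_right,
        Equiv.swap_apply_of_ne_of_ne h02.symm h12.symm, mul_inv_cancel_right]
    rw [this]
    exact mul_mem (mul_mem hm0 hm1) (inv_mem hm0)
  have hm23 : swap (x 2) y ∈ gen σ (Finset.range (2 + 1)) := by
    have : swap (x 2) y = swap (x 0) (x 2) * swap (x 0) y * (swap (x 0) (x 2))⁻¹ := by
      rw [Equiv.mul_swap_eq_swap_mul, Equiv.swap_apply_left,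
        Equiv.swap_apply_of_ne_of_ne hy0.symm hy2.symm, mul_inv_cancel_right]
    rw [this]
    exact mul_mem (mul_mem hm02 hm03) (inv_mem hm02)
  have hc02 : Commute (σ 0) (σ 2) := h.commute (by omega) le_rfl
  have hcs2 : Commute (σ 2) (swap (x 2) y) := commute_swap (by rw [← hy, e3, Equiv.swap_comm])
  have hcs0 : Commute (σ 0) (swap (x 2) y) := commute_swap (by
    rw [h0, Equiv.swap_apply_of_ne_of_ne h02.symm h12.symm,
      Equiv.swap_apply_of_ne_of_ne hy0.symm hy1.symm])
  have hsq0 := h.irr.sq 0 (Finset.mem_range.2 (by omega))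
  have hsq2 := h.irr.sq 2 (Finset.mem_range.2 (by omega))
  have hcard : ({x 0, x 1, x 2, y} : Finset X).card = 4 := by
    rw [Finset.card_insert_of_notMem (by simp [h01, h02, hy0]),
      Finset.card_insert_of_notMem (by simp [h12, hy1]), Finset.card_pair hy2]
  have hone : σ 2 * swap (x 2) y * σ 0 = 1 := by
    refine h.eq_one_of_fix (by omega) (mul_mem (mul_mem hm2 hm23) hm0) ?_
      (F := {x 0, x 1, x 2, y}) hcard.ge ?_ ?_
    · have hc : Commute (σ 2 * swap (x 2) y) (σ 0) := (hc02.mul_right hcs0).symm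
      rw [← pow_two, hc.mul_pow, hcs2.mul_pow, pow_two, pow_two, pow_two, hsq0, hsq2,
        Equiv.swap_mul_self, mul_one, mul_one]
    · intro z hz
      simp only [Finset.mem_insert, Finset.mem_singleton] at hz
      rw [Perm.mul_apply, Perm.mul_apply, h0]
      rcases hz with rfl | rfl | rfl | rfl
      · rw [Equiv.swap_apply_left, Equiv.swap_apply_of_ne_of_ne h12 hy1, e1]
      · rw [Equiv.swap_apply_right, Equiv.swap_apply_of_ne_of_ne h02 hy0, e0]
      · rw [Equiv.swap_apply_of_ne_of_ne h02.symm h12.symm, Equiv.swap_apply_left, e3]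
      · rw [Equiv.swap_apply_of_ne_of_ne hy0.symm hy1.symm, Equiv.swap_apply_right]
    · intro i hi hir z hz
      obtain ⟨f0, f1, f2⟩ := hfix i (by omega) hir
      simp only [Finset.mem_insert, Finset.mem_singleton] at hz
      rcases hz with rfl | rfl | rfl | rfl
      · exact f0
      · exact f1
      · exact f2
      · rw [hy, ← commute_apply (h.commute hir hi), f2]
  have hσ0 : σ 0 = σ 2 * swap (x 2) y := by
    have := mul_eq_one_iff_eq_inv'.1 hone
    rw [this, mul_inv_rev, Equiv.swap_inv, ← eq_inv_of_mul_eq_one_left hsq2, hcs2.eq]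
  have hσ2 : σ 2 = σ 0 * swap (x 2) y := by
    rw [hσ0, mul_assoc, Equiv.swap_mul_self, mul_one]
  obtain ⟨hnot, h3⟩ := h.eq_swap_of_fix (j := 3) (by omega) (A := {x 0, x 1, x 2, y}) hcard
    (a := y) (b := x 2) (by simp) (by simp) hy2
    (by
      intro i hi hi3 z hz
      have hi' : i = 0 ∨ i = 1 ∨ i = 2 ∨ 4 ≤ i := by omega
      rcases hi' with rfl | rfl | rfl | hi4
      · rw [h0]
        exact swap_apply_mem (by simp) (by simp) hz
      · rw [h1]
        exact swap_apply_mem (by simp) (by simp) hz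
      · rw [hσ2, h0, Perm.mul_apply]
        exact swap_apply_mem (by simp) (by simp) (swap_apply_mem (by simp) (by simp) hz)
      · obtain ⟨f0, f1, f2⟩ := hfix i (by omega) hi
        have f3 : σ i y = y := by rw [hy, ← commute_apply (h.commute hi hi4), f2]
        simp only [Finset.mem_insert, Finset.mem_singleton] at hz
        rcases hz with rfl | rfl | rfl | rfl <;> simp [f0, f1, f2, f3])
    (by
      intro i hi hir z hz
      obtain ⟨f0, f1, f2⟩ := hfix i (by omega) hir
      simp only [Finset.mem_insert, Finset.mem_singleton] at hz
      rcases hz with rfl | rfl | rfl | rfl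
      · exact f0
      · exact f1
      · exact f2
      · rw [hy, ← commute_apply (h.commute hir (by omega)), f2])
    (by
      intro z hz hzy
      obtain ⟨f0, f1, f2⟩ := hfix 3 le_rfl (by omega)
      simp only [Finset.mem_insert, Finset.mem_singleton] at hz
      rcases hz with rfl | rfl | rfl | rfl
      · exact f0
      · exact f1
      · exact f2
      · exact absurd rfl hzy)
    hm23
  set z := σ 3 y with hz
  simp only [Finset.mem_insert, Finset.mem_singleton, not_or] at hnot
  obtain ⟨hz0, hz1, hz2, hzy⟩ := hnot
  have e4 : σ 2 z = z := by
    rw [hσ2, h0, Perm.mul_apply, Equiv.swap_apply_of_ne_of_ne hz2 hzy,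
      Equiv.swap_apply_of_ne_of_ne hz0 hz1]
  have hn2 : σ 2 ∈ gen σ {2, 3} := mem_gen (by simp)
  have hn3 : σ 3 ∈ gen σ {2, 3} := mem_gen (by simp)
  have hn24 : swap (x 2) z ∈ gen σ {2, 3} := by
    have : swap (x 2) z = σ 2 * σ 3 * (σ 2)⁻¹ := by
      rw [h3, Equiv.mul_swap_eq_swap_mul, e3, e4, mul_inv_cancel_right]
    rw [this]
    exact mul_mem (mul_mem hn2 hn3) (inv_mem hn2)
  have hn23 : swap (x 2) y ∈ gen σ {2, 3} := by
    have : swap (x 2) y = σ 3 * swap (x 2) z * (σ 3)⁻¹ := by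
      rw [Equiv.mul_swap_eq_swap_mul, (hfix 3 le_rfl (by omega)).2.2, hz,
        h.apply_apply (by omega), mul_inv_cancel_right]
    rw [this]
    exact mul_mem (mul_mem hn3 hn24) (inv_mem hn3)
  refine h.irr.notMem_gen (A := {2, 3}) (i := 0) ?_ (Finset.mem_range.2 (by omega)) (by simp) ?_
  · intro i hi
    simp only [Finset.mem_insert, Finset.mem_singleton, Finset.mem_range] at hi ⊢
    omega
  · rw [hσ0]
    exact mul_mem hn2 hn23

theorem apply_path (h : IsMaximal σ r) (hj : 2 ≤ j) (hjr : j < r)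
    (hinj : Set.InjOn x (Set.Iic j)) (hx : ∀ i < j, σ i = swap (x i) (x (i + 1))) :
    ∀ i < j, σ j (x i) = x i := by
  intro i hi
  rcases Nat.eq_or_lt_of_le hj with rfl | hj3
  · obtain ⟨e0, e1⟩ := h.apply_zero_of_path_two hinj hx
    have hi' : i = 0 ∨ i = 1 := by omega
    rcases hi' with rfl | rfl
    · exact e0
    · exact e1
  · exact h.fix_path (k := j - 1) (by omega)
      (hinj.mono (Set.Iic_subset_Iic.2 (Nat.sub_le j 1))) (fun l hl => hx l (by omega)) (by omega)
      hjr i (by omega)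

/-- An initial segment of the generators that forms a path can be extended. -/
theorem exists_path_succ (h : IsMaximal σ r) (hj : 2 ≤ j) (hjr : j < r)
    (hinj : Set.InjOn x (Set.Iic j)) (hx : ∀ i < j, σ i = swap (x i) (x (i + 1))) :
    ∃ x' : ℕ → X, Set.InjOn x' (Set.Iic (j + 1)) ∧
      ∀ i < j + 1, σ i = swap (x' i) (x' (i + 1)) := by
  have hmem : ∀ i ≤ j, x i ∈ (Finset.range (j + 1)).image x := fun i hi =>
    Finset.mem_image_of_mem _ (Finset.mem_range.2 (by omega))
  have hcases : ∀ z ∈ (Finset.range (j + 1)).image x, ∃ i ≤ j, x i = z := by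
    intro z hz
    obtain ⟨i, hi, rfl⟩ := Finset.mem_image.1 hz
    exact ⟨i, by have := Finset.mem_range.1 hi; omega, rfl⟩
  obtain ⟨hnot, hswap⟩ := h.eq_swap_of_fix hjr (A := (Finset.range (j + 1)).image x)
    (a := x j) (b := x (j - 1))
    (by
      rw [Finset.card_image_of_injOn, Finset.card_range]
      refine hinj.mono fun i hi => ?_
      simp only [Finset.coe_range, Set.mem_Iio] at hi
      exact Nat.lt_succ_iff.1 hi)
    (hmem j le_rfl) (hmem (j - 1) (by omega))
    (fun e => by
      have := hinj (Set.mem_Iic.2 (Nat.sub_le j 1)) (Set.mem_Iic.2 le_rfl) e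
      omega)
    (by
      intro i hi hij z hz
      rcases Nat.lt_or_ge i j with hlt | hge
      · rw [hx i hlt]
        exact swap_apply_mem (hmem i hlt.le) (hmem (i + 1) hlt) hz
      · obtain ⟨l, hl, rfl⟩ := hcases z hz
        rwa [h.fix_path hj hinj hx (by omega) hi l hl])
    (by
      intro i hi hir z hz
      obtain ⟨l, hl, rfl⟩ := hcases z hz
      exact h.fix_path hj hinj hx (by omega) hir l hl)
    (by
      intro z hz hzj
      obtain ⟨l, hl, rfl⟩ := hcases z hz
      exact h.apply_path hj hjr hinj hx l (lt_of_le_of_ne hl fun e => hzj (by rw [e])))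
    (by
      have := hx (j - 1) (by omega)
      rw [Nat.sub_add_cancel (by omega)] at this
      rw [← this]
      exact mem_gen (Finset.mem_range.2 (by omega)))
  have hold : ∀ i ≤ j, Function.update x (j + 1) (σ j (x j)) i = x i := fun i hi =>
    Function.update_of_ne (by omega) _ _
  refine ⟨Function.update x (j + 1) (σ j (x j)), ?_, ?_⟩
  · intro i hi k hk hik
    have hi : i ≤ j + 1 := hi
    have hk : k ≤ j + 1 := hk
    rcases Nat.lt_or_ge j i with hi1 | hi1 <;> rcases Nat.lt_or_ge j k with hk1 | hk1
    · omega
    · obtain rfl : i = j + 1 := by omega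
      rw [Function.update_self, hold k hk1] at hik
      exact absurd (hik ▸ hmem k hk1) hnot
    · obtain rfl : k = j + 1 := by omega
      rw [Function.update_self, hold i hi1] at hik
      exact absurd (hik ▸ hmem i hi1) hnot
    · rw [hold i hi1, hold k hk1] at hik
      exact hinj hi1 hk1 hik
  · intro i hi
    rcases Nat.lt_or_ge i j with hlt | hge
    · rw [hold i hlt.le, hold (i + 1) hlt, hx i hlt]
    · obtain rfl : i = j := by omega
      rw [hold i le_rfl, Function.update_self]
      exact hswap

/-- The generators of a maximal family are the adjacent transpositions of a path through all
points. -/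
theorem exists_path (h : IsMaximal σ r) :
    ∃ x : ℕ → X, Set.InjOn x (Set.Iic r) ∧ ∀ i < r, σ i = swap (x i) (x (i + 1)) := by
  have hr := h.card
  have hr7 := h.seven_le
  have key : ∀ j, 2 ≤ j → j ≤ r → ∃ x : ℕ → X, Set.InjOn x (Set.Iic j) ∧
      ∀ i < j, σ i = swap (x i) (x (i + 1)) := by
    intro j hj
    induction j, hj using Nat.le_induction with
    | base => exact fun _ => h.exists_path_two
    | succ j hj ih =>
      intro hjr
      obtain ⟨x, hinj, hx⟩ := ih (by omega)
      exact h.exists_path_succ hj hjr hinj hx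
  exact key r (by omega) le_rfl

end IsMaximal

namespace IsMaximal

variable {X : Type} [Finite X] {σ : ℕ → Perm X} {r : ℕ}

theorem gen_eq_top (h : IsMaximal σ r) : gen σ (Finset.range r) = ⊤ := by
  classical
  obtain ⟨x, hinj, hx⟩ := h.exists_path
  have : MulAction.IsPretransitive
      (Subgroup.closure (σ '' (Finset.range r : Set ℕ))) X := ⟨fun y z => by
    obtain ⟨g, hg, hgy⟩ := h.trans y z
    exact ⟨⟨g, hg⟩, hgy⟩⟩
  refine closure_of_isSwap_of_isPretransitive ?_
  rintro _ ⟨i, hi, rfl⟩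
  have hi : i < r := Finset.mem_range.1 hi
  refine ⟨x i, x (i + 1), fun e => ?_, hx i hi⟩
  have := hinj (Set.mem_Iic.2 hi.le) (Set.mem_Iic.2 hi) e
  omega

theorem orderOf_mul_succ (h : IsMaximal σ r) {i : ℕ} (hi : i + 1 < r) :
    orderOf (σ i * σ (i + 1)) = 3 := by
  classical
  have := Fintype.ofFinite X
  obtain ⟨x, hinj, hx⟩ := h.exists_path
  have hne : ∀ i ≤ r, ∀ j ≤ r, i ≠ j → x i ≠ x j := fun i hi j hj hij e => hij (hinj hi hj e)
  rw [hx i (by omega), hx (i + 1) hi, Equiv.swap_comm (x i)]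
  exact (Equiv.Perm.isThreeCycle_swap_mul_swap_same
    (hne _ (by omega) _ (by omega) (by omega)) (hne _ (by omega) _ (by omega) (by omega))
    (hne _ (by omega) _ (by omega) (by omega))).orderOf

end IsMaximal

/-- The action induced on the fibers of a surjection by a group permuting these fibers. -/
theorem exists_inducedHom {X Y : Type} (G : Subgroup (Perm X)) {q : X → Y}
    (hq : Function.Surjective q) (hG : ∀ g ∈ G, ∀ x y, q x = q y → q (g x) = q (g y)) :
    ∃ φ : G →* Perm Y, ∀ g x, q (g.1 x) = φ g (q x) := by
  obtain ⟨sec, hsec⟩ := hq.hasRightInverse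
  let f : G →* Function.End Y :=
    { toFun := fun g y => q (g.1 (sec y))
      map_one' := funext hsec
      map_mul' := fun g h => funext fun y => hG g g.2 _ _ (hsec _).symm }
  exact ⟨f.toHomPerm, fun g x => hG g g.2 _ _ (hsec _).symm⟩

section Blocks

variable {X Q : Type} {τ : Perm X} {p : X → Q} {b : X → Fin 2} {G : Subgroup (Perm X)}

/-- An element of a group with two blocks that preserves the orbits of an involution interchanging
the blocks is a power of this involution. -/
theorem eq_one_or_eq_of_fiber (hcompat : ∀ g ∈ G, ∀ x y, b x = b y → b (g x) = b (g y))
    (hswap : ∀ x, b (τ x) ≠ b x) {g : Perm X} (hg : g ∈ G) (hfib : ∀ x, g x = x ∨ g x = τ x) :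
    g = 1 ∨ g = τ := by
  by_cases hx : ∃ x, g x = x
  · left
    obtain ⟨x, hx⟩ := hx
    have hblock : ∀ y, b y = b x → g y = y := fun y hy => (hfib y).resolve_right fun e =>
      hswap y (by rw [← e, hcompat g hg y x hy, hx, hy])
    ext y
    by_cases hy : b y = b x
    · exact hblock y hy
    · have h1 : g (τ y) = τ y := hblock _ (by have := hswap y; omega)
      refine (hfib y).resolve_right fun e => hswap y ?_
      rw [g.injective (h1.trans e.symm)]
  · push Not at hx
    exact Or.inr (Perm.ext fun x => (hfib x).resolve_left (hx x))

theorem nonempty_mulEquiv_prod (hp : IsInvolQuotient τ p) (hb : Function.Surjective b)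
    (hcompat : ∀ g ∈ G, ∀ x y, b x = b y → b (g x) = b (g y)) (hswap : ∀ x, b (τ x) ≠ b x)
    (hτ : τ ∈ G) (hcomm : ∀ g ∈ G, Commute g τ)
    (hsurj : ∀ k : Perm Q, ∃ g ∈ G, ∀ x, p (g x) = k (p x)) :
    Nonempty (G ≃* Perm (Fin 2) × Perm Q) := by
  obtain ⟨φ, hφ⟩ := exists_inducedHom G hb hcompat
  obtain ⟨ψ, hψ⟩ := exists_inducedHom G hp.surj fun g hg x y hxy => by
    obtain ⟨g', hg'⟩ := hp.exists_map (hcomm g hg)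
    rw [hg', hg', hxy]
  obtain ⟨x₀, -⟩ := hb 0
  have hφτ : φ ⟨τ, hτ⟩ ≠ 1 := fun e => hswap x₀ (by simpa [e] using hφ ⟨τ, hτ⟩ x₀)
  have hψτ : ψ ⟨τ, hτ⟩ = 1 := by
    ext q
    obtain ⟨x, rfl⟩ := hp.surj q
    rw [← hψ, hp.map_invol, Perm.one_apply]
  refine ⟨MulEquiv.ofBijective (φ.prod ψ) ⟨?_, ?_⟩⟩
  · rw [injective_iff_map_eq_one]
    intro g hg
    rw [MonoidHom.prod_apply, Prod.mk_eq_one] at hg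
    rcases eq_one_or_eq_of_fiber hcompat hswap g.2 (fun x => (hp.fiber x _).1 (by
      rw [hψ, hg.2, Perm.one_apply])) with h | h
    · exact Subtype.ext h
    · exact absurd ((congrArg φ (Subtype.ext h : g = ⟨τ, hτ⟩)).symm.trans hg.1) hφτ
  · rintro ⟨e, k⟩
    obtain ⟨g, hg, hgk⟩ := hsurj k
    have hψg : ψ ⟨g, hg⟩ = k := by
      ext q
      obtain ⟨x, rfl⟩ := hp.surj q
      rw [← hψ, hgk]
    have hfin : ∀ s t e : Perm (Fin 2), s ≠ e → t ≠ 1 → s * t = e := by decide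
    by_cases he : φ ⟨g, hg⟩ = e
    · exact ⟨⟨g, hg⟩, Prod.ext he hψg⟩
    · refine ⟨⟨g, hg⟩ * ⟨τ, hτ⟩, ?_⟩
      rw [map_mul, MonoidHom.prod_apply, MonoidHom.prod_apply, Prod.mk_mul_mk, hψτ, hψg, mul_one,
        hfin _ _ _ he hφτ]

end Blocks

namespace Lift

variable {X Q : Type} {ζ : Perm X} {p : X → Q} {σ : ℕ → Perm X} {σ' : ℕ → Perm Q} {r : ℕ}
  {S T : Finset ℕ}

theorem eq_of_kern_eq_bot [Finite X] (h : Lift ζ p σ σ' S T) (hker : h.kern S = ⊥) : T = S := by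
  refine Finset.eq_of_subset_of_card_le h.sub ?_
  have h1 := h.card_kern_of_card
  rw [hker, Subgroup.card_bot] at h1
  by_contra hlt
  have : 2 ^ 1 ≤ 2 ^ (S.card - T.card) := Nat.pow_le_pow_right (by norm_num) (by omega)
  omega

theorem eq_of_map_eq (h : Lift ζ p σ σ' S T) (hker : h.kern S = ⊥) {g k : Perm X}
    (hg : g ∈ gen σ S) (hk : k ∈ gen σ S) (hgk : ∀ x, p (g x) = p (k x)) : g = k := by
  have hmem : k⁻¹ * g ∈ h.kern S := by
    refine h.mem_kern.2 ⟨mul_mem (inv_mem hk) hg, fun x => ?_⟩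
    rcases (h.quot.fiber _ _).1 (hgk x) with e | e
    · left
      rw [Perm.mul_apply, ← e, perm_inv_apply]
    · right
      apply k.injective
      rw [Perm.mul_apply, perm_apply_inv, commute_apply (h.commute_invol hk), e,
        invol_apply h.quot.invol]
  rw [hker, Subgroup.mem_bot] at hmem
  exact (inv_mul_eq_one.1 hmem).symm

theorem map_pow {g : Perm X} {g' : Perm Q} (hg : ∀ x, p (g x) = g' (p x)) (k : ℕ) (x : X) :
    p ((g ^ k) x) = (g' ^ k) (p x) := by
  induction k generalizing x with
  | zero => rfl
  | succ k ih => rw [pow_succ, pow_succ, Perm.mul_apply, Perm.mul_apply, ih, hg]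

theorem orderOf_eq (h : Lift ζ p σ σ' S T) (hker : h.kern S = ⊥) {g : Perm X} {g' : Perm Q}
    (hg : g ∈ gen σ S) (hgg' : ∀ x, p (g x) = g' (p x)) : orderOf g = orderOf g' := by
  rw [orderOf_eq_orderOf_iff]
  intro k
  constructor
  · intro e
    ext q
    obtain ⟨x, rfl⟩ := h.quot.surj q
    rw [← map_pow hgg', e]
    rfl
  · intro e
    refine h.eq_of_map_eq hker (pow_mem hg k) (one_mem _) fun x => ?_
    rw [map_pow hgg', e]
    rfl

theorem isMaximal [Finite X] [Finite Q] (h : Lift ζ p σ σ' (Finset.range r) T)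
    (hker : h.kern (Finset.range r) = ⊥) (hcard : r + 1 = Nat.card Q) (hr : 7 ≤ Nat.card Q)
    (htrans : ∀ x y, ∃ g ∈ gen σ (Finset.range r), y = g x ∨ y = ζ (g x))
    (hinter : ∀ j < r, gen σ (Finset.range (j + 1)) ⊓ gen σ (Finset.Ico (j + 2) r) = ⊥) :
    IsMaximal σ' r where
  irr := h.eq_of_kern_eq_bot hker ▸ h.irr'
  card := hcard
  seven_le := hr
  trans := by
    intro q q'
    obtain ⟨x, rfl⟩ := h.quot.surj q
    obtain ⟨y, rfl⟩ := h.quot.surj q'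
    obtain ⟨g, hg, hgx⟩ := htrans x y
    obtain ⟨g', hg', hgg'⟩ := h.push subset_rfl hg
    refine ⟨g', hg', ?_⟩
    rw [← hgg']
    exact (h.quot.fiber _ _).2 hgx
  inter := by
    intro j
    rcases Nat.lt_or_ge j r with hj | hj
    · rw [eq_bot_iff]
      intro g' hg'
      have hA : Finset.range (j + 1) ⊆ Finset.range r := Finset.range_subset_range.2 hj
      have hB : Finset.Ico (j + 2) r ⊆ Finset.range r := fun i hi =>
        Finset.mem_range.2 (Finset.mem_Ico.1 hi).2
      obtain ⟨g, hg, hgg'⟩ := h.pull hA hg'.1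
      obtain ⟨k, hk, hkg'⟩ := h.pull hB hg'.2
      have hgk := h.eq_of_map_eq hker (gen_mono hA hg) (gen_mono hB hk) fun x => by
        rw [hgg', hkg']
      have hmem : g ∈ gen σ (Finset.range (j + 1)) ⊓ gen σ (Finset.Ico (j + 2) r) :=
        Subgroup.mem_inf.2 ⟨hg, hgk ▸ hk⟩
      rw [hinter j hj, Subgroup.mem_bot] at hmem
      rw [Subgroup.mem_bot]
      ext q
      obtain ⟨x, rfl⟩ := h.quot.surj q
      rw [← hgg', hmem]
      rfl
    · rw [Finset.Ico_eq_empty (by omega)]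
      simp [gen]

end Lift

theorem commute_of_mul_sq_eq_one {Γ : Type} [Group Γ] {a b : Γ} (ha : a * a = 1) (hb : b * b = 1)
    (h : (a * b) ^ 2 = 1) : Commute a b := by
  rw [pow_two] at h
  have h1 := eq_inv_of_mul_eq_one_left h
  rwa [mul_inv_rev, ← eq_inv_of_mul_eq_one_left ha, ← eq_inv_of_mul_eq_one_left hb] at h1

theorem exists_eq_or_eq_mul {Γ : Type} [Group Γ] {σ : ℕ → Γ} {S : Finset ℕ} {τ : Γ}
    (hτ : τ * τ = 1) (hc : ∀ i ∈ S, Commute (σ i) τ) {D : Set Γ}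
    (hD : ∀ d ∈ D, d = τ ∨ d ∈ gen σ S) {g : Γ} (hg : g ∈ Subgroup.closure D) :
    ∃ k ∈ gen σ S, g = k ∨ g = τ * k := by
  have hcomm : ∀ k ∈ gen σ S, k * τ = τ * k := fun k hk => (commute_of_mem_gen hc hk).eq
  induction hg using Subgroup.closure_induction with
  | mem d hd =>
    rcases hD d hd with rfl | h
    · exact ⟨1, one_mem _, Or.inr (mul_one _).symm⟩
    · exact ⟨d, h, Or.inl rfl⟩
  | one => exact ⟨1, one_mem _, Or.inl rfl⟩
  | mul a b _ _ iha ihb =>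
    obtain ⟨k, hk, ha⟩ := iha
    obtain ⟨l, hl, hb⟩ := ihb
    refine ⟨k * l, mul_mem hk hl, ?_⟩
    rcases ha with rfl | rfl <;> rcases hb with rfl | rfl
    · exact Or.inl rfl
    · exact Or.inr (by rw [← mul_assoc, hcomm _ hk, mul_assoc])
    · exact Or.inr (mul_assoc _ _ _)
    · exact Or.inl (by rw [mul_assoc, ← mul_assoc k, hcomm _ hk, ← mul_assoc, ← mul_assoc, hτ,
        one_mul])
  | inv a _ iha =>
    obtain ⟨k, hk, ha⟩ := iha
    refine ⟨k⁻¹, inv_mem hk, ?_⟩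
    rcases ha with rfl | rfl
    · exact Or.inl rfl
    · right
      rw [mul_inv_rev, ← eq_inv_of_mul_eq_one_left hτ, hcomm _ (inv_mem hk)]

/-- The increasing enumeration of the elements of `Fin r` other than `i₀`. -/
def skip {r : ℕ} (i₀ : Fin r) (j : ℕ) : Fin r :=
  if h : j < i₀ then ⟨j, h.trans i₀.2⟩ else if h : j + 1 < r then ⟨j + 1, h⟩ else i₀

section Skip

variable {r : ℕ} {i₀ : Fin r} {j : ℕ}

theorem skip_of_lt (h : j < i₀) : skip i₀ j = ⟨j, h.trans i₀.2⟩ := dif_pos h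

theorem skip_of_le (h : (i₀ : ℕ) ≤ j) (hj : j + 1 < r) : skip i₀ j = ⟨j + 1, hj⟩ := by
  rw [skip, dif_neg (by omega), dif_pos hj]

theorem val_skip (hj : j < r - 1) : (skip i₀ j : ℕ) = if j < i₀ then j else j + 1 := by
  split_ifs with h
  · rw [skip_of_lt h]
  · rw [skip_of_le (by omega) (by omega)]

theorem skip_ne (hj : j < r - 1) : skip i₀ j ≠ i₀ := fun e => by
  have := congrArg Fin.val e
  rw [val_skip hj] at this
  split_ifs at this <;> omega

theorem skip_injOn : Set.InjOn (skip i₀) (Finset.range (r - 1) : Set ℕ) := by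
  intro j hj k hk e
  have hj := Finset.mem_range.1 hj
  have hk := Finset.mem_range.1 hk
  have := congrArg Fin.val e
  rw [val_skip hj, val_skip hk] at this
  split_ifs at this <;> omega

theorem exists_skip_eq {i : Fin r} (hi : i ≠ i₀) : ∃ j < r - 1, skip i₀ j = i := by
  have hne : (i : ℕ) ≠ i₀ := fun e => hi (Fin.ext e)
  rcases Nat.lt_or_ge i i₀ with h | h
  · exact ⟨i, by omega, Fin.ext (by rw [val_skip (by omega), if_pos h])⟩
  · refine ⟨i - 1, by omega, Fin.ext ?_⟩
    rw [val_skip (by omega), if_neg (by omega)]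
    omega

end Skip

end Sggi

namespace IsStringC

open Sggi

variable {n r : ℕ} {ρ : Fin r → Perm (Fin n)} {i₀ : Fin r}

theorem mul_self (h : IsStringC ρ) (i : Fin r) : ρ i * ρ i = 1 := by
  rw [← pow_two, ← h.1.1 i, pow_orderOf_eq_one]

theorem ne_one (h : IsStringC ρ) (i : Fin r) : ρ i ≠ 1 := fun e => by
  have := h.1.1 i
  rw [e, orderOf_one] at this
  omega

theorem gen_skip_inf (h : IsStringC ρ) {A B : Finset ℕ} (hA : A ⊆ Finset.range (r - 1))
    (hB : B ⊆ Finset.range (r - 1)) (hAB : Disjoint A B) :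
    gen (ρ ∘ skip i₀) A ⊓ gen (ρ ∘ skip i₀) B = ⊥ := by
  rw [gen, gen, Set.image_comp, Set.image_comp, h.2,
    ← skip_injOn.image_inter (Finset.coe_subset.2 hA) (Finset.coe_subset.2 hB),
    (Finset.disjoint_coe.2 hAB).inter_eq]
  simp

theorem notMem_gen_skip (h : IsStringC ρ) : ρ i₀ ∉ gen (ρ ∘ skip i₀) (Finset.range (r - 1)) := by
  intro hmem
  have hinf : ρ i₀ ∈ gen (ρ ∘ skip i₀) (Finset.range (r - 1)) ⊓ Subgroup.closure (ρ '' {i₀}) :=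
    Subgroup.mem_inf.2 ⟨hmem, Subgroup.subset_closure ⟨i₀, rfl, rfl⟩⟩
  have hempty : skip i₀ '' (Finset.range (r - 1) : Set ℕ) ∩ {i₀} = ∅ := by
    ext i
    simp only [Set.mem_inter_iff, Set.mem_image, Set.mem_singleton_iff, Set.mem_empty_iff_false,
      iff_false, not_and]
    rintro ⟨j, hj, rfl⟩
    exact skip_ne (Finset.mem_range.1 hj)
  rw [gen, Set.image_comp, h.2, hempty, Set.image_empty, Subgroup.closure_empty,
    Subgroup.mem_bot] at hinf
  exact h.ne_one i₀ hinf

theorem irredundant_skip (h : IsStringC ρ) :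
    Irredundant (ρ ∘ skip i₀) (Finset.range (r - 1)) where
  sq i _ := h.mul_self _
  comm i hi j hj hij := by
    refine commute_of_mul_sq_eq_one (h.mul_self _) (h.mul_self _) (h.1.2 _ _ ?_)
    rw [lt_abs]
    right
    have h1 := val_skip (i₀ := i₀) (Finset.mem_range.1 hi)
    have h2 := val_skip (i₀ := i₀) (Finset.mem_range.1 hj)
    split_ifs at h1 h2 <;> omega
  irred i hi hmem := by
    have hinf : (ρ ∘ skip i₀) i ∈ gen (ρ ∘ skip i₀) ((Finset.range (r - 1)).erase i) ⊓
        gen (ρ ∘ skip i₀) {i} :=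
      Subgroup.mem_inf.2 ⟨hmem, mem_gen (Finset.mem_singleton_self i)⟩
    rw [h.gen_skip_inf (Finset.erase_subset _ _) (Finset.singleton_subset_iff.2 hi) (by simp),
      Subgroup.mem_bot] at hinf
    exact h.ne_one _ hinf

end IsStringC

end

theorem stmt16 {n r : ℕ} (hm7 : 7 ≤ n / 2) (hn2 : Even n) (hr : r = n / 2)
    (ρ : Fin r → Equiv.Perm (Fin n)) (hstring : IsStringC ρ)
    (htrans : MulAction.IsPretransitive ↥(Subgroup.closure (Set.range ρ)) (Fin n))
    -- the two blocks B₁ = b⁻¹ 0 and B₂ = b⁻¹ 1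
    (b : Fin n → Fin 2) (hbsurj : Function.Surjective b)
    (hfib : ∀ c : Fin 2, Set.ncard {x | b x = c} = n / 2)
    (hcompat : ∀ g ∈ Subgroup.closure (Set.range ρ), ∀ x y : Fin n,
      b x = b y → b (g x) = b (g y))
    -- ρ i₀ interchanges the two blocks
    (i₀ : Fin r) (hswap : ∀ x : Fin n, b (ρ i₀ x) ≠ b x)
    -- R = ∅
    (hR : {i : Fin r | i ≠ i₀ ∧ ¬ Commute (ρ i) (ρ i₀)} = ∅) :
    Nonempty (↥(Subgroup.closure (Set.range ρ)) ≃*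
      (Equiv.Perm (Fin 2) × Equiv.Perm (Fin (n / 2)))) ∧
    ((orderOf (ρ ⟨0, by omega⟩ * ρ ⟨1, by omega⟩) = 2 ∧
        ∀ (i : ℕ) (hi1 : 1 ≤ i) (hi2 : i ≤ r - 2),
          orderOf (ρ ⟨i, by omega⟩ * ρ ⟨i + 1, by omega⟩) = 3) ∨
      (orderOf (ρ ⟨r - 2, by omega⟩ * ρ ⟨r - 1, by omega⟩) = 2 ∧
        ∀ (i : ℕ) (hi3 : i ≤ r - 3),
          orderOf (ρ ⟨i, by omega⟩ * ρ ⟨i + 1, by omega⟩) = 3)) := by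
  classical
  have hτ := hstring.mul_self i₀
  have hcomm : ∀ i, Commute (ρ i) (ρ i₀) := by
    intro i
    by_contra hne
    have : i ∈ {i : Fin r | i ≠ i₀ ∧ ¬ Commute (ρ i) (ρ i₀)} :=
      ⟨fun e => hne (e ▸ Commute.refl _), hne⟩
    rw [hR] at this
    exact this
  set G := Subgroup.closure (Set.range ρ) with hG
  have hρG : ∀ i, ρ i ∈ G := fun i => Subgroup.subset_closure ⟨i, rfl⟩
  set σ := ρ ∘ Sggi.skip i₀ with hσ
  have hgenG : Sggi.gen σ (Finset.range (r - 1)) ≤ G := Sggi.gen_le fun i _ => hρG _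
  have hfac : ∀ g ∈ G, ∃ k ∈ Sggi.gen σ (Finset.range (r - 1)), g = k ∨ g = ρ i₀ * k := by
    refine fun g hg => Sggi.exists_eq_or_eq_mul hτ (fun i _ => hcomm _) ?_ hg
    rintro _ ⟨i, rfl⟩
    by_cases hi : i = i₀
    · exact Or.inl (by rw [hi])
    · obtain ⟨j, hj, rfl⟩ := Sggi.exists_skip_eq hi
      exact Or.inr (Sggi.mem_gen (σ := σ) (Finset.mem_range.2 hj))
  have hcommG : ∀ g ∈ G, Commute g (ρ i₀) := by
    intro g hg
    obtain ⟨k, hk, rfl | rfl⟩ := hfac g hg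
    · exact Sggi.commute_of_mem_gen (fun i _ => hcomm _) hk
    · exact (Commute.refl _).mul_left (Sggi.commute_of_mem_gen (fun i _ => hcomm _) hk)
  obtain ⟨Q, hQ, p, σ', T, L⟩ := Sggi.exists_lift hτ hstring.irredundant_skip
    fun i _ => hcomm (Sggi.skip i₀ i)
  have hker : L.kern (Finset.range (r - 1)) = ⊥ := by
    rw [eq_bot_iff]
    intro v hv
    obtain ⟨hvS, hvf⟩ := L.mem_kern.1 hv
    rcases Sggi.eq_one_or_eq_of_fiber hcompat hswap (hgenG hvS) hvf with rfl | rfl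
    · exact one_mem _
    · exact absurd hvS hstring.notMem_gen_skip
  have hcardQ : Nat.card Q = n / 2 := by
    have h1 := L.quot.card_le_two_mul
    have h2 := L.quot.two_mul_card_le fun x e => hswap x (by rw [e])
    rw [Nat.card_fin] at h1 h2
    omega
  have hmax : Sggi.IsMaximal σ' (r - 1) := by
    refine L.isMaximal hker (by omega) (by omega) (fun x y => ?_) (fun j hj => ?_)
    · obtain ⟨⟨g, hg⟩, hgx⟩ := htrans.exists_smul_eq x y
      obtain ⟨k, hk, rfl | rfl⟩ := hfac g hg
      · exact ⟨_, hk, Or.inl hgx.symm⟩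
      · exact ⟨_, hk, Or.inr hgx.symm⟩
    · refine hstring.gen_skip_inf (Finset.range_subset_range.2 hj) (fun i hi => ?_) ?_
      · exact Finset.mem_range.2 (Finset.mem_Ico.1 hi).2
      · rw [Finset.disjoint_left]
        intro i hi hi'
        rw [Finset.mem_range] at hi
        rw [Finset.mem_Ico] at hi'
        omega
  have horder : ∀ i, i + 1 < r - 1 → orderOf (σ i * σ (i + 1)) = 3 := by
    intro i hi
    have hi0 : i ∈ Finset.range (r - 1) := Finset.mem_range.2 (by omega)
    have hi1 : i + 1 ∈ Finset.range (r - 1) := Finset.mem_range.2 hi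
    rw [← hmax.orderOf_mul_succ hi]
    refine L.orderOf_eq hker (mul_mem (Sggi.mem_gen hi0) (Sggi.mem_gen hi1)) fun x => ?_
    rw [Equiv.Perm.mul_apply, Equiv.Perm.mul_apply, ← L.map _ hi1, ← L.map _ hi0]
  have hτne : ∀ i, i ≠ i₀ → ρ i ≠ ρ i₀ := by
    intro i hi e
    obtain ⟨j, hj, rfl⟩ := Sggi.exists_skip_eq hi
    have hmem : ρ (Sggi.skip i₀ j) ∈ Sggi.gen σ (Finset.range (r - 1)) :=
      Sggi.mem_gen (σ := σ) (Finset.mem_range.2 hj)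
    exact hstring.notMem_gen_skip (e ▸ hmem)
  have htwo : ∀ i, i ≠ i₀ → orderOf (ρ i * ρ i₀) = 2 := by
    intro i hi
    refine orderOf_eq_prime ?_ fun e => hτne i hi ?_
    · rw [(hcomm i).mul_pow, pow_two, pow_two, hτ, hstring.mul_self, mul_one]
    · rw [eq_inv_of_mul_eq_one_left e, ← eq_inv_of_mul_eq_one_left hτ]
  refine ⟨?_, ?_⟩
  · obtain ⟨e⟩ := Sggi.nonempty_mulEquiv_prod L.quot hbsurj hcompat hswap (hρG i₀) hcommG
      fun k => by
        obtain ⟨g, hg, hgk⟩ := L.pull subset_rfl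
          (hmax.gen_eq_top ▸ Subgroup.mem_top k : k ∈ Sggi.gen σ' (Finset.range (r - 1)))
        exact ⟨g, hgenG hg, hgk⟩
    exact ⟨e.trans ((MulEquiv.refl _).prodCongr (Finite.equivFinOfCardEq hcardQ).permCongrHom)⟩
  · have hends : (i₀ : ℕ) = 0 ∨ (i₀ : ℕ) = r - 1 := by
      by_contra! hint
      have h1 := horder (i₀ - 1) (by omega)
      have h2 : (σ (i₀ - 1) * σ (i₀ - 1 + 1)) ^ 2 = 1 := by
        refine hstring.1.2 _ _ ?_
        rw [lt_abs, Sggi.val_skip (by omega), Sggi.val_skip (by omega), if_pos (by omega),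
          if_neg (by omega)]
        omega
      have := orderOf_dvd_of_pow_eq_one h2
      rw [h1] at this
      omega
    rcases hends with h0 | hlast
    · refine Or.inl ⟨?_, fun i hi1 hi2 => ?_⟩
      · have hi₀ : i₀ = ⟨0, by omega⟩ := Fin.ext h0
        have := htwo ⟨1, by omega⟩ (by simp [hi₀])
        rwa [(hcomm _).eq, hi₀] at this
      · have := horder (i - 1) (by omega)
        rw [hσ, Function.comp_apply, Function.comp_apply, Sggi.skip_of_le (by omega) (by omega),
          Sggi.skip_of_le (by omega) (by omega)] at this
        simpa only [Nat.sub_add_cancel hi1] using this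
    · refine Or.inr ⟨?_, fun i hi => ?_⟩
      · have hlt : r - 1 < r := by omega
        have hi₀ : i₀ = ⟨r - 1, hlt⟩ := Fin.ext hlast
        rw [← hi₀]
        exact htwo _ fun e => by
          have : r - 2 = i₀ := congrArg Fin.val e
          omega
      · have := horder i (by omega)
        rwa [hσ, Function.comp_apply, Function.comp_apply, Sggi.skip_of_lt (by omega),
          Sggi.skip_of_lt (by omega)] at this
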